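/- arXiv:1304.0562 — 8 statements merged into one kernel-verified Lean document; each statement's English description precedes it below -/
import Mathlib

section
/- The function θ is smooth on ℝ × (0,∞) and solves the heat equation there: for all x ∈ ℝ and t > 0, ∂θ/∂t (x,t) = (1/2)·∂²θ/∂x² (x,t). -/
open Real MeasureTheory Set Filter

/-- The Jacobi-theta-type function `θ(x,t) = 1/2 + ∑_{n≥1} exp(−π²n²t/2)·cos(πnx)`. -/
noncomputable def thetaFn (x t : ℝ) : ℝ :=
  1/2 + ∑' n : ℕ, Real.exp (-(π^2) * ((n : ℝ) + 1)^2 * t / 2) * Real.cos (π * ((n : ℝ) + 1) * x)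

/-- General term: the `n`-th term with weight `(n+1)^k` and phase `φ`. -/
noncomputable def thTerm (k : ℕ) (φ : ℝ) (n : ℕ) (p : ℝ × ℝ) : ℝ :=
  ((n : ℝ) + 1)^k * (Real.exp (-(π^2) * ((n : ℝ) + 1)^2 * p.2 / 2) *
    Real.cos (π * ((n : ℝ) + 1) * p.1 + φ))

/-- The sum of the general terms. -/
noncomputable def thSum (k : ℕ) (φ : ℝ) (p : ℝ × ℝ) : ℝ := ∑' n : ℕ, thTerm k φ n p

lemma th_bound_summable (k : ℕ) {e : ℝ} (he : 0 < e) :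
    Summable (fun n : ℕ => ((n : ℝ) + 1)^k * Real.exp (-(π^2) * ((n : ℝ) + 1)^2 * e / 2)) := by
  have hr : 0 < π^2 * e / 2 := by positivity
  have h := (summable_nat_add_iff 1).2 (Real.summable_pow_mul_exp_neg_nat_mul k hr)
  refine Summable.of_nonneg_of_le (fun n => by positivity) (fun n => ?_) h
  push_cast
  gcongr
  have hn : (0 : ℝ) ≤ n := n.cast_nonneg
  have : (n : ℝ) + 1 ≤ ((n : ℝ) + 1)^2 := by nlinarith
  have := mul_le_mul_of_nonneg_left this hr.le
  linarith

lemma thTerm_le (k : ℕ) (φ : ℝ) (n : ℕ) {e : ℝ} {p : ℝ × ℝ} (hp : e ≤ p.2) :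
    ‖thTerm k φ n p‖ ≤ ((n : ℝ) + 1)^k * Real.exp (-(π^2) * ((n : ℝ) + 1)^2 * e / 2) := by
  unfold thTerm
  rw [norm_mul, norm_mul, Real.norm_of_nonneg (by positivity : (0:ℝ) ≤ ((n : ℝ) + 1)^k),
    Real.norm_of_nonneg (Real.exp_pos _).le]
  have h1 : ‖Real.cos (π * ((n : ℝ) + 1) * p.1 + φ)‖ ≤ 1 := Real.abs_cos_le_one _
  have h2 : Real.exp (-(π^2) * ((n : ℝ) + 1)^2 * p.2 / 2)
      ≤ Real.exp (-(π^2) * ((n : ℝ) + 1)^2 * e / 2) := by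
    apply Real.exp_le_exp.2
    have := mul_le_mul_of_nonneg_left hp (by positivity : 0 ≤ π^2 * ((n : ℝ) + 1)^2)
    linarith
  gcongr
  calc _ ≤ Real.exp (-(π^2) * ((n : ℝ) + 1)^2 * e / 2) * 1 := by gcongr
    _ = _ := mul_one _

lemma thTerm_summable (k : ℕ) (φ : ℝ) {p : ℝ × ℝ} (hp : 0 < p.2) :
    Summable (fun n => thTerm k φ n p) :=
  Summable.of_norm_bounded (th_bound_summable k hp) (fun n => thTerm_le k φ n le_rfl)

lemma thTerm_hasFDerivAt (k : ℕ) (φ : ℝ) (n : ℕ) (p : ℝ × ℝ) :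
    HasFDerivAt (thTerm k φ n)
      (thTerm (k+1) (φ + π/2) n p • (π • ContinuousLinearMap.fst ℝ ℝ ℝ) +
        thTerm (k+2) φ n p • ((-(π^2)/2) • ContinuousLinearMap.snd ℝ ℝ ℝ)) p := by
  have h1 : HasFDerivAt (fun p : ℝ × ℝ => p.1) (ContinuousLinearMap.fst ℝ ℝ ℝ) p := hasFDerivAt_fst
  have h2 : HasFDerivAt (fun p : ℝ × ℝ => p.2) (ContinuousLinearMap.snd ℝ ℝ ℝ) p := hasFDerivAt_snd
  have hc := ((h1.const_mul (π * ((n : ℝ) + 1))).add_const φ).cos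
  have he := ((h2.const_mul (-(π^2) * ((n : ℝ) + 1)^2)).mul_const (1/2 : ℝ)).exp
  have h := (he.mul hc).const_mul (((n : ℝ) + 1)^k)
  have hf : thTerm k φ n = fun p : ℝ × ℝ => ((n : ℝ) + 1)^k *
      (Real.exp (-(π^2) * ((n : ℝ) + 1)^2 * p.2 * (1/2)) *
        Real.cos (π * ((n : ℝ) + 1) * p.1 + φ)) := by
    funext q; simp only [thTerm]; ring_nf
  rw [hf]
  refine h.congr_fderiv ?_
  ext
  · simp [thTerm, ← add_assoc, Real.cos_add_pi_div_two]; ring_nf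
  · simp [thTerm]; ring_nf

lemma thSum_hasFDerivAt (k : ℕ) (φ : ℝ) {p : ℝ × ℝ} (hp : 0 < p.2) :
    HasFDerivAt (thSum k φ)
      (thSum (k+1) (φ + π/2) p • (π • ContinuousLinearMap.fst ℝ ℝ ℝ) +
        thSum (k+2) φ p • ((-(π^2)/2) • ContinuousLinearMap.snd ℝ ℝ ℝ)) p := by
  have he : 0 < p.2 / 2 := by linarith
  set A := π • ContinuousLinearMap.fst ℝ ℝ ℝ
  set B := (-(π^2)/2) • ContinuousLinearMap.snd ℝ ℝ ℝ
  have hu := ((th_bound_summable (k+1) he).mul_right ‖A‖).add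
    ((th_bound_summable (k+2) he).mul_right ‖B‖)
  have hconv : Convex ℝ {q : ℝ × ℝ | p.2 / 2 < q.2} :=
    convex_halfSpace_gt (IsLinearMap.mk (fun _ _ => rfl) (fun _ _ => rfl)) _
  have hmem : p ∈ {q : ℝ × ℝ | p.2 / 2 < q.2} := by simp only [Set.mem_ofPred_eq]; linarith
  have h := hasFDerivAt_tsum_of_isPreconnected (f := fun n => thTerm k φ n) hu
    (isOpen_lt continuous_const continuous_snd) hconv.isPreconnected
    (fun n q _ => thTerm_hasFDerivAt k φ n q)
    (fun n q hq => by
      have hq' : p.2 / 2 ≤ q.2 := le_of_lt hq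
      refine (norm_add_le _ _).trans ?_
      refine add_le_add ?_ ?_
      · exact (norm_smul_le _ A).trans
          (mul_le_mul_of_nonneg_right (thTerm_le _ _ _ hq') (norm_nonneg A))
      · exact (norm_smul_le _ B).trans
          (mul_le_mul_of_nonneg_right (thTerm_le _ _ _ hq') (norm_nonneg B))) hmem (thTerm_summable k φ hp) hmem
  refine h.congr_fderiv ?_
  exact (((thTerm_summable (k+1) (φ + π/2) hp).hasSum.smul_const A).add
    ((thTerm_summable (k+2) φ hp).hasSum.smul_const B)).tsum_eq

lemma th_isOpen : IsOpen ((Set.univ : Set ℝ) ×ˢ Set.Ioi (0:ℝ)) := isOpen_univ.prod isOpen_Ioi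

lemma thSum_contDiffOn (m : ℕ) : ∀ (k : ℕ) (φ : ℝ),
    ContDiffOn ℝ m (thSum k φ) (Set.univ ×ˢ Set.Ioi (0:ℝ)) := by
  induction m with
  | zero =>
    intro k φ
    rw [Nat.cast_zero, contDiffOn_zero]
    exact fun p hp => (thSum_hasFDerivAt k φ hp.2).continuousAt.continuousWithinAt
  | succ m ih =>
    intro k φ
    rw [Nat.cast_succ, contDiffOn_succ_iff_fderiv_of_isOpen th_isOpen]
    refine ⟨fun p hp => (thSum_hasFDerivAt k φ hp.2).differentiableAt.differentiableWithinAt,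
      by simp, ?_⟩
    refine ContDiffOn.congr ?_ (fun p hp => (thSum_hasFDerivAt k φ hp.2).fderiv)
    exact ((ih _ _).smul contDiffOn_const).add ((ih _ _).smul contDiffOn_const)

lemma thetaFn_eq (x t : ℝ) : thetaFn x t = 1/2 + thSum 0 0 (x, t) := by
  simp [thetaFn, thSum, thTerm]

lemma thSum_deriv_x (k : ℕ) (φ x : ℝ) {t : ℝ} (ht : 0 < t) :
    HasDerivAt (fun y => thSum k φ (y, t)) (thSum (k+1) (φ + π/2) (x, t) * π) x := by
  have h := (thSum_hasFDerivAt k φ (p := (x, t)) ht).comp_hasDerivAt x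
    ((hasDerivAt_id x).prodMk (hasDerivAt_const x t))
  refine HasDerivAt.congr_deriv h ?_
  simp

lemma thSum_deriv_t (k : ℕ) (φ x : ℝ) {t : ℝ} (ht : 0 < t) :
    HasDerivAt (fun s => thSum k φ (x, s)) (thSum (k+2) φ (x, t) * (-(π^2)/2)) t := by
  have h := (thSum_hasFDerivAt k φ (p := (x, t)) ht).comp_hasDerivAt t
    ((hasDerivAt_const t x).prodMk (hasDerivAt_id t))
  refine HasDerivAt.congr_deriv h ?_
  simp

lemma thSum_add_pi (k : ℕ) (φ : ℝ) (p : ℝ × ℝ) : thSum k (φ + π/2 + π/2) p = - thSum k φ p := by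
  unfold thSum
  rw [← tsum_neg]
  congr 1
  funext n
  have : π * ((n : ℝ) + 1) * p.1 + (φ + π/2 + π/2) = π * ((n : ℝ) + 1) * p.1 + φ + π := by ring
  simp only [thTerm, this, Real.cos_add_pi]
  ring

/-- θ is smooth on ℝ × (0,∞) and solves the heat equation
`∂θ/∂t = (1/2)·∂²θ/∂x²` there. -/
theorem stmt1 :
    ContDiffOn ℝ (⊤ : ℕ∞) (fun p : ℝ × ℝ => thetaFn p.1 p.2) (Set.univ ×ˢ Set.Ioi (0:ℝ)) ∧
    ∀ x t : ℝ, 0 < t →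
      deriv (fun s => thetaFn x s) t = (1/2) * iteratedDeriv 2 (fun y => thetaFn y t) x := by
  simp only [thetaFn_eq]
  constructor
  · exact contDiffOn_const.add (contDiffOn_infty.2 fun m => thSum_contDiffOn m 0 0)
  · intro x t ht
    rw [((thSum_deriv_t 0 0 x ht).const_add (1/2)).deriv, iteratedDeriv_succ, iteratedDeriv_one]
    have h1 : deriv (fun y => 1/2 + thSum 0 0 (y, t)) =
        fun y => thSum (0+1) (0 + π/2) (y, t) * π :=
      funext fun y => ((thSum_deriv_x 0 0 y ht).const_add (1/2)).deriv
    rw [h1, ((thSum_deriv_x (0+1) (0 + π/2) x ht).mul_const π).deriv, thSum_add_pi]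
    ring
end

section
/- For every t > 0, the function x ↦ θ(x,t) is strictly decreasing on the interval [0,1]. -/
open Real MeasureTheory Set Filter

noncomputable def hP (q : ℝ) (m : ℕ) : ℝ := ∏ k ∈ Finset.range m, (1 - q ^ (2 * (k + 1)))

noncomputable def gG (q : ℝ) (m : ℤ) : ℝ := if m < 0 then 0 else (hP q m.toNat)⁻¹

noncomputable def cC (q : ℝ) (N : ℕ) (j : ℤ) : ℝ := gG q (N - j) * gG q (N + j) * q ^ (j ^ 2)

noncomputable def pP (q : ℝ) (N : ℕ) (c : ℝ) : ℝ :=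
  ∏ k ∈ Finset.range N, (1 + 2 * q ^ (2 * k + 1) * c + (q ^ (2 * k + 1)) ^ 2)

lemma hP_fac_pos {q : ℝ} (h0 : 0 < q) (h1 : q < 1) (k : ℕ) : 0 < 1 - q ^ (2 * (k + 1)) := by
  have := pow_lt_one₀ h0.le h1 (n := 2 * (k + 1)) (by omega)
  linarith

lemma hP_pos {q : ℝ} (h0 : 0 < q) (h1 : q < 1) (m : ℕ) : 0 < hP q m :=
  Finset.prod_pos fun k _ => hP_fac_pos h0 h1 k

lemma hP_anti {q : ℝ} (h0 : 0 < q) (h1 : q < 1) : Antitone (hP q) := by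
  apply antitone_nat_of_succ_le
  intro n
  rw [hP, Finset.prod_range_succ]
  have := hP_pos h0 h1 n
  rw [hP] at this ⊢
  have h2 : 0 < q ^ (2 * (n + 1)) := by positivity
  nlinarith

lemma hP_lim {q : ℝ} (h0 : 0 < q) (h1 : q < 1) :
    ∃ l : ℝ, 0 < l ∧ (∀ m, l ≤ hP q m) ∧ Tendsto (hP q) atTop (nhds l) := by
  have hs : Summable fun k : ℕ => ‖-(q ^ (2 * (k + 1)))‖ := by
    have : Summable fun k : ℕ => q ^ 2 * (q ^ 2) ^ k :=
      (summable_geometric_of_lt_one (by positivity) (by nlinarith)).mul_left _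
    refine this.congr fun k => ?_
    rw [norm_neg, Real.norm_of_nonneg (by positivity)]
    ring
  have hm := multipliable_one_add_of_summable hs
  have ht := hm.tendsto_prod_tprod_nat
  have hne := tprod_one_add_ne_zero_of_summable
    (f := fun k : ℕ => -(q ^ (2 * (k + 1)))) (fun k => by
      have := hP_fac_pos h0 h1 k
      rw [← sub_eq_add_neg]; exact this.ne') hs
  simp only [← sub_eq_add_neg] at ht hne
  have hle : ∀ m, (∏' k : ℕ, (1 - q ^ (2 * (k + 1)))) ≤ hP q m :=
    fun m => (hP_anti h0 h1).le_of_tendsto ht m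
  refine ⟨_, lt_of_le_of_ne ?_ (Ne.symm hne), hle, ht⟩
  exact ge_of_tendsto' ht fun m => (hP_pos h0 h1 m).le

lemma gG_rec {q : ℝ} (h0 : 0 < q) (h1 : q < 1) (m : ℤ) :
    gG q m = (1 - q ^ (2 * (m + 1))) * gG q (m + 1) := by
  rcases lt_trichotomy m (-1) with h | h | h
  · simp [gG, show m < 0 by omega, show m + 1 < 0 by omega]
  · subst h; simp [gG]
  · lift m to ℕ using by omega
    have e : ((m : ℤ) + 1).toNat = m + 1 := by omega
    have e2 : q ^ (2 * ((m : ℤ) + 1)) = q ^ (2 * (m + 1)) := by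
      rw [← zpow_natCast]; push_cast; rfl
    rw [gG, gG, if_neg (by omega), if_neg (by omega), e, Int.toNat_natCast, e2, hP, hP,
      Finset.prod_range_succ]
    have := hP_fac_pos h0 h1 m
    have h3 := hP_pos h0 h1 m
    rw [hP] at h3
    field_simp

lemma cC_rec {q : ℝ} (h0 : 0 < q) (h1 : q < 1) (N : ℕ) (j : ℤ) :
    (1 - q ^ (2 * (2 * N + 1))) * (1 - q ^ (2 * (2 * N + 1 + 1))) * cC q (N + 1) j =
      (1 + (q ^ (2 * N + 1)) ^ 2) * cC q N j
        + q ^ (2 * N + 1) * (cC q N (j - 1) + cC q N (j + 1)) := by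
  have hq := h0.ne'
  have a1 := gG_rec h0 h1 (N - j)
  have a2 := gG_rec h0 h1 (N - j - 1)
  have b1 := gG_rec h0 h1 (N + j)
  have b2 := gG_rec h0 h1 (N + j - 1)
  rw [sub_add_cancel] at a2 b2
  unfold cC
  rw [show ((N + 1 : ℕ) : ℤ) - j = N - j + 1 by push_cast; ring,
    show ((N + 1 : ℕ) : ℤ) + j = N + j + 1 by push_cast; ring,
    show (N : ℤ) - (j - 1) = N - j + 1 by ring,
    show (N : ℤ) + (j - 1) = N + j - 1 by ring,
    show (N : ℤ) - (j + 1) = N - j - 1 by ring,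
    show (N : ℤ) + (j + 1) = N + j + 1 by ring, a2, b2, a1, b1]
  have e1 : q ^ ((j - 1) ^ 2) = q ^ (j ^ 2) * q / (q ^ j) ^ 2 := by
    rw [show (j - 1) ^ 2 = j ^ 2 + 1 - (j + j) by ring, zpow_sub₀ hq, zpow_add₀ hq, zpow_add₀ hq,
      zpow_one, sq (q ^ j)]
  have e2 : q ^ ((j + 1) ^ 2) = q ^ (j ^ 2) * q * (q ^ j) ^ 2 := by
    rw [show (j + 1) ^ 2 = j ^ 2 + 1 + (j + j) by ring, zpow_add₀ hq, zpow_add₀ hq, zpow_add₀ hq,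
      zpow_one, sq (q ^ j)]
  have e3 : q ^ (2 * ((N : ℤ) - j)) = (q ^ N) ^ 2 / (q ^ j) ^ 2 := by
    rw [show 2 * ((N : ℤ) - j) = N + N - (j + j) by ring, zpow_sub₀ hq, zpow_add₀ hq, zpow_add₀ hq,
      zpow_natCast, sq, sq]
  have e4 : q ^ (2 * ((N : ℤ) + j)) = (q ^ N) ^ 2 * (q ^ j) ^ 2 := by
    rw [show 2 * ((N : ℤ) + j) = N + N + (j + j) by ring, zpow_add₀ hq, zpow_add₀ hq, zpow_add₀ hq,
      zpow_natCast, sq, sq]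
  have e5 : q ^ (2 * ((N : ℤ) - j + 1)) = (q ^ N) ^ 2 / (q ^ j) ^ 2 * q ^ 2 := by
    rw [mul_add, zpow_add₀ hq, e3]; rfl
  have e6 : q ^ (2 * ((N : ℤ) + j + 1)) = (q ^ N) ^ 2 * (q ^ j) ^ 2 * q ^ 2 := by
    rw [mul_add, zpow_add₀ hq, e4]; rfl
  have n1 : q ^ (2 * N + 1) = (q ^ N) ^ 2 * q := by ring
  have n2 : q ^ (2 * (2 * N + 1)) = (q ^ N) ^ 4 * q ^ 2 := by ring
  have n3 : q ^ (2 * (2 * N + 1 + 1)) = (q ^ N) ^ 4 * q ^ 4 := by ring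
  rw [e1, e2, e3, e4, e5, e6, n1, n2, n3]
  have hV : q ^ j ≠ 0 := zpow_ne_zero _ hq
  generalize q ^ j = V at *
  generalize q ^ (j ^ 2) = U at *
  generalize q ^ N = M at *
  field_simp
  ring

lemma cC_zero {q : ℝ} (N : ℕ) (j : ℤ) (hj : j ∉ Finset.Icc (-(N : ℤ)) N) : cC q N j = 0 := by
  rw [Finset.mem_Icc, not_and_or, not_le, not_le] at hj
  rcases hj with h | h
  · simp [cC, gG, show (N : ℤ) + j < 0 by omega]
  · simp [cC, gG, show (N : ℤ) - j < 0 by omega]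

lemma cC_hasSum {q : ℝ} (h0 : 0 < q) (h1 : q < 1) (y : ℝ) (N : ℕ) :
    HasSum (fun j : ℤ => cC q N j * cos (j * y)) (pP q N (cos y) / hP q (2 * N)) := by
  induction N with
  | zero =>
    have := hasSum_single (f := fun j : ℤ => cC q 0 j * cos (j * y)) 0 (fun j hj => by
      rw [cC_zero, zero_mul]; simpa using hj)
    simpa [cC, gG, hP, pP] using this
  | succ N ih =>
    have s1 : Summable fun j : ℤ => cC q N j * cos ((j + 1 : ℤ) * y) :=
      summable_of_ne_finset_zero (s := Finset.Icc (-(N : ℤ)) N) fun j hj => by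
        rw [cC_zero N j hj, zero_mul]
    have s2 : Summable fun j : ℤ => cC q N j * cos ((j - 1 : ℤ) * y) :=
      summable_of_ne_finset_zero (s := Finset.Icc (-(N : ℤ)) N) fun j hj => by
        rw [cC_zero N j hj, zero_mul]
    obtain ⟨A, hA⟩ := s1
    obtain ⟨B, hB⟩ := s2
    have hAB : A + B = 2 * cos y * (pP q N (cos y) / hP q (2 * N)) := by
      refine (hA.add hB).unique ?_
      refine Eq.mpr (congrArg (fun f => HasSum f _) (funext fun j => ?_)) (ih.mul_left (2 * cos y))
      push_cast
      rw [add_mul, sub_mul, one_mul, cos_add, cos_sub]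
      ring
    have hA' := (Equiv.subRight (1 : ℤ)).hasSum_iff.mpr hA
    have hB' := (Equiv.addRight (1 : ℤ)).hasSum_iff.mpr hB
    have hT := (ih.mul_left (1 + (q ^ (2 * N + 1)) ^ 2)).add
      ((hA'.add hB').mul_left (q ^ (2 * N + 1)))
    rw [hAB] at hT
    have p1 := hP_fac_pos h0 h1 (2 * N)
    have p2 := hP_fac_pos h0 h1 (2 * N + 1)
    have hT2 := hT.mul_left ((1 - q ^ (2 * (2 * N + 1))) * (1 - q ^ (2 * (2 * N + 1 + 1))))⁻¹
    have key : pP q (N + 1) (cos y) / hP q (2 * (N + 1)) =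
        ((1 - q ^ (2 * (2 * N + 1))) * (1 - q ^ (2 * (2 * N + 1 + 1))))⁻¹ *
          ((1 + (q ^ (2 * N + 1)) ^ 2) * (pP q N (cos y) / hP q (2 * N)) +
            q ^ (2 * N + 1) * (2 * cos y * (pP q N (cos y) / hP q (2 * N)))) := by
      rw [show 2 * (N + 1) = 2 * N + 1 + 1 by ring, hP, Finset.prod_range_succ,
        Finset.prod_range_succ, pP, Finset.prod_range_succ, ← pP, ← hP]
      have := hP_pos h0 h1 (2 * N)
      field_simp
      ring
    rw [key]
    refine Eq.mpr (congrArg (fun f => HasSum f _) (funext fun j => ?_)) hT2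
    · have := cC_rec h0 h1 N j
      rw [eq_inv_mul_iff_mul_eq₀ (by positivity), ← mul_assoc, this]
      simp
      ring

lemma gG_bd {q l : ℝ} (h0 : 0 < q) (h1 : q < 1) (hl : 0 < l) (hl' : ∀ m, l ≤ hP q m) (m : ℤ) :
    0 ≤ gG q m ∧ gG q m ≤ l⁻¹ := by
  unfold gG
  split_ifs
  · exact ⟨le_rfl, by positivity⟩
  · exact ⟨inv_nonneg.2 (hP_pos h0 h1 _).le, inv_anti₀ hl (hl' _)⟩

lemma gG_lim {q l : ℝ} (hl : 0 < l) (hl' : Tendsto (hP q) atTop (nhds l)) :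
    Tendsto (gG q) atTop (nhds l⁻¹) := by
  have h2 : Tendsto (fun m : ℤ => (hP q m.toNat)⁻¹) atTop (nhds l⁻¹) := by
    apply Tendsto.inv₀ _ hl.ne'
    apply hl'.comp
    exact tendsto_atTop.2 fun b => by
      filter_upwards [eventually_ge_atTop (b : ℤ)] with a ha
      omega
  refine h2.congr' ?_
  filter_upwards [eventually_ge_atTop 0] with m hm
  rw [gG, if_neg (by omega)]

lemma nat_summable {q : ℝ} (h0 : 0 < q) (h1 : q < 1) :
    Summable fun n : ℕ => q ^ ((n + 1) ^ 2) := by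
  refine Summable.of_nonneg_of_le (fun n => by positivity) (fun n => ?_)
    (summable_geometric_of_lt_one h0.le h1)
  exact pow_le_pow_of_le_one h0.le h1.le (by nlinarith)

lemma int_summable {q : ℝ} (h0 : 0 < q) (h1 : q < 1) :
    Summable fun j : ℤ => q ^ (j ^ 2) := by
  obtain ⟨a, ha⟩ := nat_summable h0 h1
  have e (n : ℕ) : q ^ (((n : ℤ) + 1) ^ 2) = q ^ ((n + 1) ^ 2) := by
    rw [← zpow_natCast]; push_cast; rfl
  refine (HasSum.of_add_one_of_neg_add_one (f := fun j : ℤ => q ^ (j ^ 2)) (m := a) (m' := a)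
    ?_ ?_).summable
  · simpa only [e] using ha
  · simpa only [neg_sq, e] using ha

lemma theta_int {t : ℝ} (ht : 0 < t) (x : ℝ) :
    HasSum (fun j : ℤ => (exp (-(π ^ 2) * t / 2)) ^ (j ^ 2) * cos (j * (π * x)))
      (2 * thetaFn x t) := by
  set q := exp (-(π ^ 2) * t / 2) with hq
  have h0 : 0 < q := exp_pos _
  have h1 : q < 1 := by
    rw [hq, exp_lt_one_iff]
    have : 0 < π ^ 2 * t := by positivity
    linarith
  have e (n : ℕ) : q ^ (((n : ℤ) + 1) ^ 2) = q ^ ((n + 1) ^ 2) := by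
    rw [← zpow_natCast]; push_cast; rfl
  have e' (n : ℕ) : exp (-(π^2) * ((n : ℝ) + 1)^2 * t / 2) = q ^ ((n + 1) ^ 2) := by
    rw [hq, ← exp_nat_mul]; push_cast; congr 1; ring
  have hs : Summable fun n : ℕ => q ^ ((n + 1) ^ 2) * cos (π * ((n : ℝ) + 1) * x) := by
    refine Summable.of_norm_bounded (nat_summable h0 h1) fun n => ?_
    rw [norm_mul, norm_of_nonneg (by positivity)]
    exact mul_le_of_le_one_right (by positivity) (abs_cos_le_one _)
  have hh := hs.hasSum
  have := HasSum.of_add_one_of_neg_add_one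
    (f := fun j : ℤ => q ^ (j ^ 2) * cos (j * (π * x)))
    (m := ∑' n : ℕ, q ^ ((n + 1) ^ 2) * cos (π * ((n : ℝ) + 1) * x))
    (m' := ∑' n : ℕ, q ^ ((n + 1) ^ 2) * cos (π * ((n : ℝ) + 1) * x)) ?_ ?_
  · convert this using 1
    simp only [thetaFn, e']
    simp
    ring
  · convert hh using 2 with n
    rw [e]; push_cast; congr 2; ring
  · convert hh using 2 with n
    rw [neg_sq, e]; push_cast; rw [neg_mul, cos_neg]; congr 2; ring

lemma pP_lim {t : ℝ} (ht : 0 < t) {q l : ℝ} (hq : q = exp (-(π ^ 2) * t / 2))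
    (h0 : 0 < q) (h1 : q < 1) (hl : 0 < l) (hl' : ∀ m, l ≤ hP q m)
    (hlim : Tendsto (hP q) atTop (nhds l)) (x : ℝ) :
    Tendsto (fun N => pP q N (cos (π * x))) atTop (nhds (2 * thetaFn x t * l⁻¹)) := by
  have hT : Tendsto (fun N : ℕ => ∑' j : ℤ, cC q N j * cos (j * (π * x))) atTop
      (nhds (∑' j : ℤ, l⁻¹ * l⁻¹ * (q ^ (j ^ 2) * cos (j * (π * x))))) := by
    refine tendsto_tsum_of_dominated_convergence
      (bound := fun j : ℤ => l⁻¹ * l⁻¹ * q ^ (j ^ 2)) ((int_summable h0 h1).mul_left _) ?_ ?_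
    · intro j
      have a : Tendsto (fun N : ℕ => gG q (N - j)) atTop (nhds l⁻¹) :=
        (gG_lim hl hlim).comp
          (tendsto_atTop_add_const_right _ (-j) tendsto_natCast_atTop_atTop)
      have b : Tendsto (fun N : ℕ => gG q (N + j)) atTop (nhds l⁻¹) :=
        (gG_lim hl hlim).comp
          (tendsto_atTop_add_const_right _ j tendsto_natCast_atTop_atTop)
      have := ((a.mul b).mul_const (q ^ (j ^ 2))).mul_const (cos (j * (π * x)))
      rw [← mul_assoc (l⁻¹ * l⁻¹)]
      exact this
    · refine Eventually.of_forall fun N j => ?_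
      obtain ⟨a1, a2⟩ := gG_bd h0 h1 hl hl' (N - j)
      obtain ⟨b1, b2⟩ := gG_bd h0 h1 hl hl' (N + j)
      have hU : 0 < q ^ (j ^ 2) := zpow_pos h0 _
      rw [norm_mul, cC, norm_of_nonneg (by positivity)]
      refine (mul_le_of_le_one_right (by positivity) (abs_cos_le_one _)).trans ?_
      gcongr
  have hth := (theta_int ht x).mul_left (l⁻¹ * l⁻¹)
  rw [← hq] at hth
  rw [hth.tsum_eq] at hT
  simp only [(cC_hasSum h0 h1 (π * x) _).tsum_eq] at hT
  have hh : Tendsto (fun N => hP q (2 * N)) atTop (nhds l) :=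
    hlim.comp (tendsto_id.const_mul_atTop' (by norm_num : 0 < 2))
  have := hT.mul hh
  have e : l⁻¹ * l⁻¹ * (2 * thetaFn x t) * l = 2 * thetaFn x t * l⁻¹ := by field_simp
  rw [e] at this
  refine this.congr fun N => ?_
  have := hP_pos h0 h1 (2 * N)
  field_simp

lemma pP_fac_lb {q c : ℝ} (h0 : 0 < q) (hc : -1 ≤ c) (k : ℕ) :
    (1 - q ^ (2 * k + 1)) ^ 2 ≤ 1 + 2 * q ^ (2 * k + 1) * c + (q ^ (2 * k + 1)) ^ 2 := by
  have : 0 < q ^ (2 * k + 1) := by positivity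
  nlinarith

lemma pP_lb {q c : ℝ} (h0 : 0 < q) (h1 : q < 1) (hc : -1 ≤ c) (N : ℕ) :
    ((1 - q) * hP q N) ^ 2 ≤ pP q (N + 1) c := by
  have : ∏ k ∈ Finset.range (N + 1), (1 - q ^ (2 * k + 1)) ^ 2 ≤ pP q (N + 1) c :=
    Finset.prod_le_prod (fun k _ => sq_nonneg _) fun k _ => pP_fac_lb h0 hc k
  refine le_trans ?_ this
  rw [Finset.prod_pow, Finset.prod_range_succ', mul_comm (1 - q)]
  have h3 : hP q N ≤ ∏ k ∈ Finset.range N, (1 - q ^ (2 * (k + 1) + 1)) := by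
    refine Finset.prod_le_prod (fun k _ => (hP_fac_pos h0 h1 k).le) fun k _ => ?_
    have := pow_le_pow_of_le_one h0.le h1.le (show 2 * (k + 1) ≤ 2 * (k + 1) + 1 by omega)
    linarith
  have := hP_pos h0 h1 N
  have : 0 < 1 - q := by linarith
  simp only [mul_zero, zero_add, pow_one]
  gcongr

/-- For every `t > 0`, `x ↦ θ(x,t)` is strictly decreasing on `[0,1]`. -/
theorem stmt2 (t : ℝ) (ht : 0 < t) :
    StrictAntiOn (fun x => thetaFn x t) (Set.Icc (0:ℝ) 1) := by
  obtain ⟨q, hq⟩ : ∃ q, q = exp (-(π ^ 2) * t / 2) := ⟨_, rfl⟩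
  have h0 : 0 < q := hq ▸ exp_pos _
  have h1 : q < 1 := by
    rw [hq, exp_lt_one_iff]
    have : 0 < π ^ 2 * t := by positivity
    linarith
  obtain ⟨l, hl, hl', hlim⟩ := hP_lim h0 h1
  intro x hx y hy hxy
  have hX := (tendsto_add_atTop_iff_nat 1).2 (pP_lim ht hq h0 h1 hl hl' hlim x)
  have hY := (tendsto_add_atTop_iff_nat 1).2 (pP_lim ht hq h0 h1 hl hl' hlim y)
  have hc : cos (π * y) < cos (π * x) := by
    apply strictAntiOn_cos
    · exact ⟨by have := hx.1; positivity, by nlinarith [pi_pos, hx.2]⟩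
    · exact ⟨by have := hy.1; positivity, by nlinarith [pi_pos, hy.2]⟩
    · exact mul_lt_mul_of_pos_left hxy pi_pos
  have hcy := neg_one_le_cos (π * y)
  generalize cos (π * x) = c at *
  generalize cos (π * y) = d at *
  have hpos : 0 < 2 * thetaFn y t * l⁻¹ := by
    have : 0 < ((1 - q) * l) ^ 2 := by
      have : 0 < 1 - q := by linarith
      positivity
    refine this.trans_le (ge_of_tendsto' hY fun N => ?_)
    refine le_trans ?_ (pP_lb h0 h1 hcy N)
    have : 0 < 1 - q := by linarith
    have := hl' N
    gcongr
  have hfac (k : ℕ) : 0 ≤ 1 + 2 * q ^ (2 * k + 1) * d + (q ^ (2 * k + 1)) ^ 2 :=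
    (sq_nonneg _).trans (pP_fac_lb h0 hcy k)
  have hmono : (1 + 2 * q * c + q ^ 2) * (2 * thetaFn y t * l⁻¹) ≤
      (1 + 2 * q * d + q ^ 2) * (2 * thetaFn x t * l⁻¹) := by
    refine le_of_tendsto_of_tendsto' (hY.const_mul _) (hX.const_mul _) fun N => ?_
    unfold pP
    rw [Finset.prod_range_succ', Finset.prod_range_succ']
    have h3 : ∏ k ∈ Finset.range N,
          (1 + 2 * q ^ (2 * (k + 1) + 1) * d + (q ^ (2 * (k + 1) + 1)) ^ 2) ≤
        ∏ k ∈ Finset.range N,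
          (1 + 2 * q ^ (2 * (k + 1) + 1) * c + (q ^ (2 * (k + 1) + 1)) ^ 2) := by
      refine Finset.prod_le_prod (fun k _ => hfac (k + 1)) fun k _ => ?_
      gcongr
    have hd : 0 ≤ 1 + 2 * q * d + q ^ 2 := by simpa using hfac 0
    have hcc : 0 ≤ 1 + 2 * q * c + q ^ 2 := by nlinarith
    simp only [mul_zero, zero_add, pow_one]
    nlinarith [mul_le_mul_of_nonneg_left h3 (mul_nonneg hd hcc)]
  have hd : 0 < 1 + 2 * q * d + q ^ 2 := by nlinarith [sq_nonneg (1 - q)]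
  have hlt : (1 + 2 * q * d + q ^ 2) * (2 * thetaFn y t * l⁻¹) <
      (1 + 2 * q * d + q ^ 2) * (2 * thetaFn x t * l⁻¹) := by
    refine lt_of_lt_of_le ?_ hmono
    gcongr
  have h5 := lt_of_mul_lt_mul_left hlt hd.le
  have h6 := lt_of_mul_lt_mul_right h5 (by positivity)
  show thetaFn y t < thetaFn x t
  linarith
end

section
/- The function θ̄ is strictly increasing on (0,∞), satisfies θ̄(t) → 0 as t → 0+ (so that setting θ̄(0) = 0 gives a continuous extension to [0,∞)), and θ̄(t) → 1 as t → ∞. -/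
open Real MeasureTheory Set Filter

/-- `θ̄(t) = ∑_{n≥1} (−1)^{n+1}·n²·exp(−π²(n²−1)t/2)`. -/
noncomputable def thetaBar (t : ℝ) : ℝ :=
  ∑' n : ℕ, (-1 : ℝ)^n * ((n : ℝ) + 1)^2 *
    Real.exp (-(π^2) * (((n : ℝ) + 1)^2 - 1) * t / 2)

lemma tb_summable_nat (k : ℕ) {s : ℝ} (hs : 0 < s) :
    Summable fun n : ℕ => ((n : ℝ) + 1) ^ k * rexp (-(π ^ 2) * ((n : ℝ) + 1) ^ 2 * s) := by
  refine (HurwitzKernelBounds.summable_f_nat k 1 (mul_pos pi_pos hs)).congr fun n => ?_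
  rw [HurwitzKernelBounds.f_nat]
  congr 2
  ring

lemma tb_summable_int (k : ℕ) {s : ℝ} (hs : 0 < s) :
    Summable fun n : ℤ => |(n : ℝ) - 1 / 2| ^ k * rexp (-(((n : ℝ) - 1 / 2) ^ 2) / s) := by
  have h : 0 < 1 / (π * s) := by positivity
  refine (HurwitzKernelBounds.summable_f_int k (-1 / 2) h).congr fun n => ?_
  rw [HurwitzKernelBounds.f_int]
  have : (n : ℝ) + -1 / 2 = n - 1 / 2 := by ring
  rw [this]
  congr 2
  have := pi_pos.ne'
  field_simp

lemma tb_poisson {s : ℝ} (hs : 0 < s) :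
    ∑' n : ℤ, (-1 : ℝ) ^ n * rexp (-(π ^ 2) * (n : ℝ) ^ 2 * s) =
      (√(π * s))⁻¹ * ∑' n : ℤ, rexp (-(((n : ℝ) - 1 / 2) ^ 2) / s) := by
  have hps : 0 < π * s := mul_pos pi_pos hs
  have h := Complex.tsum_exp_neg_quadratic (a := ((π * s : ℝ) : ℂ))
    (by rwa [Complex.ofReal_re]) (Complex.I / 2)
  have e1 : ∀ n : ℤ, Complex.exp (-π * ((π * s : ℝ) : ℂ) * n ^ 2 + 2 * π * (Complex.I / 2) * n)
      = (((-1 : ℝ) ^ n * rexp (-(π ^ 2) * (n : ℝ) ^ 2 * s) : ℝ) : ℂ) := by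
    intro n
    rw [Complex.exp_add]
    have : (2 * π * (Complex.I / 2) * n : ℂ) = n * (π * Complex.I) := by ring
    rw [this, Complex.exp_int_mul, Complex.exp_pi_mul_I]
    push_cast
    rw [mul_comm]
    congr 2
    ring
  have e2 : ∀ n : ℤ, Complex.exp (-π / ((π * s : ℝ) : ℂ) * (n + Complex.I * (Complex.I / 2)) ^ 2)
      = ((rexp (-(((n : ℝ) - 1 / 2) ^ 2) / s) : ℝ) : ℂ) := by
    intro n
    have : (n + Complex.I * (Complex.I / 2) : ℂ) = n - 1 / 2 := by
      linear_combination (1 / 2 : ℂ) * Complex.I_mul_I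
    rw [this]
    push_cast
    congr 1
    have h1 : (π : ℂ) ≠ 0 := by exact_mod_cast pi_pos.ne'
    have h2 : (s : ℂ) ≠ 0 := by exact_mod_cast hs.ne'
    field_simp
  have e3 : (1 : ℂ) / ((π * s : ℝ) : ℂ) ^ (1 / 2 : ℂ) = (((√(π * s))⁻¹ : ℝ) : ℂ) := by
    rw [Real.sqrt_eq_rpow, Complex.ofReal_inv, Complex.ofReal_cpow hps.le]
    simp
  simp_rw [e1, e2] at h
  rw [e3, ← Complex.ofReal_tsum, ← Complex.ofReal_tsum, ← Complex.ofReal_mul] at h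
  exact_mod_cast h

lemma tb_fold {s : ℝ} (hs : 0 < s) :
    ∑' n : ℤ, (-1 : ℝ) ^ n * rexp (-(π ^ 2) * (n : ℝ) ^ 2 * s) =
      1 - 2 * ∑' n : ℕ, (-1 : ℝ) ^ n * rexp (-(π ^ 2) * ((n : ℝ) + 1) ^ 2 * s) := by
  have hsum := tb_summable_nat 0 hs
  have hF : Summable fun n : ℕ => (-1 : ℝ) ^ n * rexp (-(π ^ 2) * ((n : ℝ) + 1) ^ 2 * s) := by
    apply Summable.of_norm
    simpa using hsum
  set f : ℤ → ℝ := fun n => (-1 : ℝ) ^ n * rexp (-(π ^ 2) * (n : ℝ) ^ 2 * s) with hf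
  have h1 : ∀ n : ℕ, f (n + 1) = -((-1 : ℝ) ^ n * rexp (-(π ^ 2) * ((n : ℝ) + 1) ^ 2 * s)) := by
    intro n
    simp only [hf]
    have : ((n : ℤ) + 1) = ((n + 1 : ℕ) : ℤ) := by push_cast; ring
    rw [this, zpow_natCast, pow_succ]
    push_cast
    ring
  have hneg : ∀ n : ℤ, f (-n) = f n := by
    intro n
    simp only [hf]
    rw [zpow_neg, ← inv_zpow]
    norm_num
  have hs1 : HasSum (fun n : ℕ => f (n + 1)) (-∑' n : ℕ, (-1 : ℝ) ^ n * rexp (-(π ^ 2) * ((n : ℝ) + 1) ^ 2 * s)) := by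
    simp_rw [h1]
    exact hF.hasSum.neg
  have hs0 : HasSum (fun n : ℕ => f n) (1 + -∑' n : ℕ, (-1 : ℝ) ^ n * rexp (-(π ^ 2) * ((n : ℝ) + 1) ^ 2 * s)) := by
    have := (hasSum_nat_add_iff' (f := fun n : ℕ => f n) (g := 1 + -∑' n : ℕ, (-1 : ℝ) ^ n * rexp (-(π ^ 2) * ((n : ℝ) + 1) ^ 2 * s)) 1).1
    apply this
    simpa [hf] using hs1
  have := HasSum.of_nat_of_neg_add_one (f := f) hs0 (by
    have : (fun n : ℕ => f (-((n : ℤ) + 1))) = fun n : ℕ => f (n + 1) := by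
      funext n
      exact hneg _
    rw [this]
    exact hs1)
  rw [this.tsum_eq]
  ring

lemma tb_deriv_left {s : ℝ} (hs : 0 < s) :
    HasDerivAt (fun s => ∑' n : ℕ, (-1 : ℝ) ^ n * rexp (-(π ^ 2) * ((n : ℝ) + 1) ^ 2 * s))
      (-(π ^ 2) * rexp (-(π ^ 2) * s) * thetaBar (2 * s)) s := by
  have hu := (tb_summable_nat 2 (half_pos hs)).mul_left (π ^ 2)
  have h := hasDerivAt_tsum_of_isPreconnected (t := Ioi (s / 2)) (y₀ := s) (y := s)
    (g := fun (n : ℕ) s => (-1 : ℝ) ^ n * rexp (-(π ^ 2) * ((n : ℝ) + 1) ^ 2 * s))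
    (g' := fun (n : ℕ) s => (-1 : ℝ) ^ n * (rexp (-(π ^ 2) * ((n : ℝ) + 1) ^ 2 * s) *
      (-(π ^ 2) * ((n : ℝ) + 1) ^ 2))) hu
    isOpen_Ioi isPreconnected_Ioi
    (by
      intro n y _
      have := ((hasDerivAt_id y).const_mul (-(π ^ 2) * ((n : ℝ) + 1) ^ 2)).exp.const_mul ((-1 : ℝ) ^ n)
      simpa using this)
    (by
      intro n y hy
      simp only [norm_mul, norm_pow, norm_neg, norm_one, one_pow, one_mul, Real.norm_eq_abs,
        abs_exp, abs_of_pos pi_pos]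
      rw [abs_of_pos (by positivity : (0 : ℝ) < n + 1)]
      have : rexp (-(π ^ 2) * ((n : ℝ) + 1) ^ 2 * y) ≤ rexp (-(π ^ 2) * ((n : ℝ) + 1) ^ 2 * (s / 2)) := by
        apply Real.exp_le_exp.2
        have : (0 : ℝ) ≤ π ^ 2 * (n + 1) ^ 2 := by positivity
        have hy' : s / 2 < y := hy
        nlinarith
      calc _ ≤ rexp (-(π ^ 2) * ((n : ℝ) + 1) ^ 2 * (s / 2)) * (π ^ 2 * ((n : ℝ) + 1) ^ 2) := by gcongr
        _ = _ := by ring)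
    (by simp [hs]) 
    (by
      apply Summable.of_norm
      simpa using tb_summable_nat 0 hs)
    (by simp [hs])
  refine h.congr_deriv ?_
  symm
  rw [thetaBar, ← tsum_mul_left]
  congr 1
  funext n
  have : rexp (-(π ^ 2) * ((n : ℝ) + 1) ^ 2 * s) = rexp (-(π ^ 2) * s) * rexp (-(π^2) * (((n : ℝ) + 1)^2 - 1) * (2 * s) / 2) := by
    rw [← Real.exp_add]
    congr 1
    ring
  rw [this]
  ring

lemma tb_deriv_right {s : ℝ} (hs : 0 < s) :
    HasDerivAt (fun s => ∑' n : ℤ, rexp (-(((n : ℝ) - 1 / 2) ^ 2) / s))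
      (∑' n : ℤ, rexp (-(((n : ℝ) - 1 / 2) ^ 2) / s) * ((((n : ℝ) - 1 / 2) ^ 2) / s ^ 2)) s := by
  have hu := (tb_summable_int 2 (by positivity : 0 < 2 * s)).mul_right (1 / (s / 2) ^ 2)
  have hmem : s ∈ Ioo (s / 2) (2 * s) := ⟨by linarith, by linarith⟩
  refine hasDerivAt_tsum_of_isPreconnected (t := Ioo (s / 2) (2 * s)) (y₀ := s) (y := s)
    (g := fun (n : ℤ) s => rexp (-(((n : ℝ) - 1 / 2) ^ 2) / s))
    (g' := fun (n : ℤ) s => rexp (-(((n : ℝ) - 1 / 2) ^ 2) / s) * ((((n : ℝ) - 1 / 2) ^ 2) / s ^ 2))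
    hu isOpen_Ioo isPreconnected_Ioo ?_ ?_ hmem ?_ hmem
  · intro n y hy
    have hy0 : 0 < y := by linarith [hy.1]
    have := ((hasDerivAt_inv hy0.ne').const_mul (-(((n : ℝ) - 1 / 2) ^ 2))).exp
    simp only [← div_eq_mul_inv] at this
    refine this.congr_deriv ?_
    ring
  · intro n y hy
    have hy1 := hy.1
    have hy2 := hy.2
    have hy0 : 0 < y := by linarith [hy.1]
    rw [Real.norm_of_nonneg (by positivity), sq_abs]
    have : rexp (-(((n : ℝ) - 1 / 2) ^ 2) / y) ≤ rexp (-(((n : ℝ) - 1 / 2) ^ 2) / (2 * s)) := by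
      apply Real.exp_le_exp.2
      rw [neg_div, neg_div, neg_le_neg_iff]
      gcongr
    calc _ ≤ rexp (-(((n : ℝ) - 1 / 2) ^ 2) / (2 * s)) * ((((n : ℝ) - 1 / 2) ^ 2) / (s / 2) ^ 2) := by gcongr
      _ = _ := by ring
  · simpa using tb_summable_int 0 hs

/-- dual summand -/
noncomputable def tbH (n : ℤ) (s : ℝ) : ℝ :=
  (√s)⁻¹ * s⁻¹ * ((((n : ℝ) - 1 / 2) ^ 2) / s - 1 / 2) * rexp (-(((n : ℝ) - 1 / 2) ^ 2) / s)

lemma tb_summable_H {s : ℝ} (hs : 0 < s) : Summable fun n => tbH n s := by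
  have h := ((tb_summable_int 2 hs).mul_left ((√s)⁻¹ * s⁻¹ * s⁻¹)).sub
    ((tb_summable_int 0 hs).mul_left ((√s)⁻¹ * s⁻¹ * (1 / 2)))
  refine h.congr fun n => ?_
  rw [tbH, sq_abs]
  ring

lemma tb_dual {s : ℝ} (hs : 0 < s) :
    thetaBar (2 * s) = rexp (π ^ 2 * s) * ((2 * π ^ 2 * √π)⁻¹ * ∑' n, tbH n s) := by
  have hL := ((tb_deriv_left hs).const_mul 2).const_sub 1
  have hpi := pi_pos
  have hsq : HasDerivAt (fun s => (√π)⁻¹ * (√s)⁻¹) ((√π)⁻¹ * (-(1 / (2 * √s)) / (√s) ^ 2)) s :=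
    ((Real.hasDerivAt_sqrt hs.ne').inv (Real.sqrt_pos.2 hs).ne').const_mul _
  have hR := hsq.mul (tb_deriv_right hs)
  have heq : (fun s => 1 - 2 * ∑' n : ℕ, (-1 : ℝ) ^ n * rexp (-(π ^ 2) * ((n : ℝ) + 1) ^ 2 * s))
      =ᶠ[nhds s] (fun s => (√π)⁻¹ * (√s)⁻¹) * (fun s => ∑' n : ℤ, rexp (-(((n : ℝ) - 1 / 2) ^ 2) / s)) := by
    filter_upwards [lt_mem_nhds hs] with y hy
    rw [← tb_fold hy, tb_poisson hy, Real.sqrt_mul hpi.le]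
    simp only [Pi.mul_apply, mul_inv]
  have hL' := hR.congr_of_eventuallyEq heq
  have hu := hL.unique hL'
  have hs2 : √s ^ 2 = s := Real.sq_sqrt hs.le
  have hsp := Real.sqrt_pos.2 hs
  have hH : ∑' n, tbH n s = (√s)⁻¹ * (∑' n : ℤ, rexp (-(((n : ℝ) - 1 / 2) ^ 2) / s) * ((((n : ℝ) - 1 / 2) ^ 2) / s ^ 2))
      - (√s)⁻¹ * s⁻¹ * (1 / 2) * ∑' n : ℤ, rexp (-(((n : ℝ) - 1 / 2) ^ 2) / s) := by
    rw [← tsum_mul_left, ← tsum_mul_left, ← Summable.tsum_sub]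
    · congr 1
      funext n
      rw [tbH]
      ring
    · refine ((tb_summable_int 2 hs).mul_left ((√s)⁻¹ * s⁻¹ * s⁻¹)).congr fun n => ?_
      rw [sq_abs]
      ring
    · refine ((tb_summable_int 0 hs).mul_left ((√s)⁻¹ * s⁻¹ * (1 / 2))).congr fun n => ?_
      simp
  rw [hH]
  have hE : rexp (π ^ 2 * s) * rexp (-(π ^ 2) * s) = 1 := by
    rw [← Real.exp_add]; simp
  have hsp' := Real.sqrt_pos.2 hpi
  generalize (∑' n : ℤ, rexp (-(((n : ℝ) - 1 / 2) ^ 2) / s) * ((((n : ℝ) - 1 / 2) ^ 2) / s ^ 2)) = X at *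
  generalize (∑' n : ℤ, rexp (-(((n : ℝ) - 1 / 2) ^ 2) / s)) = Y at *
  have key : (√s)⁻¹ * X - (√s)⁻¹ * s⁻¹ * (1 / 2) * Y = √π * (2 * π ^ 2 * rexp (-(π ^ 2) * s) * thetaBar (2 * s)) := by
    have : 2 * π ^ 2 * rexp (-(π ^ 2) * s) * thetaBar (2 * s) = (√π)⁻¹ * (-(1 / (2 * √s)) / √s ^ 2) * Y + (√π)⁻¹ * (√s)⁻¹ * X := by
      rw [← hu]; ring
    rw [this, hs2]
    field_simp
    ring
  rw [key]
  calc thetaBar (2 * s) = (rexp (π ^ 2 * s) * rexp (-(π ^ 2) * s)) * thetaBar (2 * s) := by rw [hE, one_mul]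
    _ = _ := by field_simp

lemma tb_F_anti : StrictAntiOn (fun u : ℝ => u ^ 3 * (u - 1 / 2) ^ 2 * rexp (-2 * u)) (Ici 3) := by
  apply strictAntiOn_of_deriv_neg (convex_Ici 3) (by fun_prop)
  intro u hu
  rw [interior_Ici] at hu
  have hu : 3 < u := hu
  have h1 : HasDerivAt (fun u : ℝ => u ^ 3 * (u - 1 / 2) ^ 2 * rexp (-2 * u))
      ((3 * u ^ 2 * (u - 1 / 2) ^ 2 + u ^ 3 * (2 * (u - 1 / 2))) * rexp (-2 * u)
        + u ^ 3 * (u - 1 / 2) ^ 2 * (rexp (-2 * u) * (-2))) u := by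
    have a := hasDerivAt_pow 3 u
    have b := ((hasDerivAt_id u).sub_const (1 / 2)).pow 2
    have c := ((hasDerivAt_id u).const_mul (-2)).exp
    refine ((a.mul b).mul c).congr_deriv ?_
    simp
  rw [h1.deriv]
  have : (3 * u ^ 2 * (u - 1 / 2) ^ 2 + u ^ 3 * (2 * (u - 1 / 2))) * rexp (-2 * u)
        + u ^ 3 * (u - 1 / 2) ^ 2 * (rexp (-2 * u) * (-2))
      = -(u ^ 2 * (u - 1 / 2) * rexp (-2 * u) * (2 * u ^ 2 - 6 * u + 3 / 2)) := by ring
  rw [this, neg_lt_zero]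
  have h2 : 0 < u - 1 / 2 := by linarith
  have h3 : 0 < 2 * u ^ 2 - 6 * u + 3 / 2 := by nlinarith
  positivity

lemma tb_a (n : ℤ) : (1 : ℝ) / 4 ≤ ((n : ℝ) - 1 / 2) ^ 2 := by
  have : (0 : ℝ) ≤ (n : ℝ) * (n - 1) := by
    rcases le_or_gt n 0 with h | h
    · have : (n : ℝ) ≤ 0 := by exact_mod_cast h
      nlinarith
    · have : (1 : ℝ) ≤ n := by exact_mod_cast h
      nlinarith
  nlinarith

lemma tb_u (n : ℤ) {s : ℝ} (hs : s ∈ Ioc (0 : ℝ) (1 / 15)) : 3 ≤ ((n : ℝ) - 1 / 2) ^ 2 / s := by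
  rw [le_div_iff₀ hs.1]
  linarith [tb_a n, hs.2]

lemma tb_H_nonneg (n : ℤ) {s : ℝ} (hs : s ∈ Ioc (0 : ℝ) (1 / 15)) : 0 ≤ tbH n s := by
  have := tb_u n hs
  have h0 := hs.1
  have : 0 ≤ ((n : ℝ) - 1 / 2) ^ 2 / s - 1 / 2 := by linarith
  unfold tbH
  positivity

lemma tb_H_sq (n : ℤ) {s : ℝ} (hs : 0 < s) : (tbH n s) ^ 2 =
    ((((n : ℝ) - 1 / 2) ^ 2) ^ 3)⁻¹ * (fun u : ℝ => u ^ 3 * (u - 1 / 2) ^ 2 * rexp (-2 * u)) (((n : ℝ) - 1 / 2) ^ 2 / s) := by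
  have ha : (0 : ℝ) < ((n : ℝ) - 1 / 2) ^ 2 := by linarith [tb_a n]
  rw [tbH]
  generalize ((n : ℝ) - 1 / 2) ^ 2 = a at *
  have hE : rexp (-2 * (a / s)) = rexp (-a / s) ^ 2 := by
    rw [← Real.exp_nat_mul]; congr 1; push_cast; ring
  simp only [hE, mul_pow, inv_pow, Real.sq_sqrt hs.le]
  field_simp

lemma tb_H_mono (n : ℤ) : StrictMonoOn (tbH n) (Ioc 0 (1 / 15)) := by
  intro x hx y hy hxy
  apply lt_of_pow_lt_pow_left₀ 2 (tb_H_nonneg n hy)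
  have ha : (0 : ℝ) < ((n : ℝ) - 1 / 2) ^ 2 := by linarith [tb_a n]
  rw [tb_H_sq n hx.1, tb_H_sq n hy.1]
  apply mul_lt_mul_of_pos_left _ (by positivity)
  apply tb_F_anti (tb_u n hy) (tb_u n hx)
  have := hx.1
  gcongr

lemma tb_H_tendsto (n : ℤ) : Tendsto (tbH n) (nhdsWithin 0 (Ioi 0)) (nhds 0) := by
  have ha : (0 : ℝ) < ((n : ℝ) - 1 / 2) ^ 2 := by linarith [tb_a n]
  have hu : Tendsto (fun s : ℝ => ((n : ℝ) - 1 / 2) ^ 2 / s) (nhdsWithin 0 (Ioi 0)) atTop :=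
    tendsto_inv_nhdsGT_zero.const_mul_atTop ha
  have hF : Tendsto (fun u : ℝ => u ^ 3 * (u - 1 / 2) ^ 2 * rexp (-2 * u)) atTop (nhds 0) := by
    have h (k : ℕ) : Tendsto (fun u : ℝ => u ^ k * rexp (-2 * u)) atTop (nhds 0) := by
      have := ((tendsto_pow_mul_exp_neg_atTop_nhds_zero k).comp
        (tendsto_id.const_mul_atTop (two_pos : (0 : ℝ) < 2))).const_mul ((1 / 2 : ℝ) ^ k)
      rw [mul_zero] at this
      refine this.congr fun u => ?_
      simp only [Function.comp, id]
      rw [← mul_assoc, ← mul_pow]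
      congr 2 <;> ring
    have := ((h 5).sub (h 4)).add ((h 3).const_mul (1 / 4))
    simp only [mul_zero, sub_zero, add_zero] at this
    refine this.congr fun u => ?_
    ring
  have h2 : Tendsto (fun s => (tbH n s) ^ 2) (nhdsWithin 0 (Ioi 0)) (nhds 0) := by
    have := (hF.comp hu).const_mul ((((n : ℝ) - 1 / 2) ^ 2) ^ 3)⁻¹
    rw [mul_zero] at this
    refine this.congr' ?_
    filter_upwards [self_mem_nhdsWithin] with s hs
    rw [tb_H_sq n hs]
    rfl
  have h3 := h2.sqrt
  rw [Real.sqrt_zero] at h3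
  simp only [Real.sqrt_sq_eq_abs] at h3
  exact (tendsto_zero_iff_abs_tendsto_zero _).2 h3

lemma tb_mono_small : StrictMonoOn thetaBar (Ioc 0 (2 / 15)) := by
  intro x hx y hy hxy
  have hx' : x / 2 ∈ Ioc (0 : ℝ) (1 / 15) := ⟨by linarith [hx.1], by linarith [hx.2]⟩
  have hy' : y / 2 ∈ Ioc (0 : ℝ) (1 / 15) := ⟨by linarith [hy.1], by linarith [hy.2]⟩
  have hxy' : x / 2 < y / 2 := by linarith
  have ex := tb_dual hx'.1
  have ey := tb_dual hy'.1
  rw [mul_div_cancel₀ x two_ne_zero] at ex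
  rw [mul_div_cancel₀ y two_ne_zero] at ey
  rw [ex, ey]
  have h1 : ∑' n, tbH n (x / 2) < ∑' n, tbH n (y / 2) :=
    Summable.tsum_lt_tsum (i := 0) (fun n => (tb_H_mono n hx' hy' hxy').le) (tb_H_mono 0 hx' hy' hxy')
      (tb_summable_H hx'.1) (tb_summable_H hy'.1)
  have h0 : 0 ≤ ∑' n, tbH n (x / 2) := tsum_nonneg fun n => tb_H_nonneg n hx'
  have hpi := pi_pos
  have hc : (0 : ℝ) < (2 * π ^ 2 * √π)⁻¹ := by positivity
  exact mul_lt_mul'' (by gcongr) (by gcongr) (by positivity) (by positivity)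

lemma tb_tendsto_zero : Tendsto thetaBar (nhdsWithin 0 (Ioi 0)) (nhds 0) := by
  have h1 : Tendsto (fun s => ∑' n, tbH n s) (nhdsWithin 0 (Ioi 0)) (nhds (∑' _ : ℤ, (0 : ℝ))) := by
    apply tendsto_tsum_of_dominated_convergence (bound := fun n => tbH n (1 / 15))
      (tb_summable_H (by norm_num)) (fun n => tb_H_tendsto n)
    have : Ioc (0 : ℝ) (1 / 15) ∈ nhdsWithin (0 : ℝ) (Ioi 0) := Ioc_mem_nhdsGT (by norm_num)
    filter_upwards [this] with s hs n
    rw [Real.norm_of_nonneg (tb_H_nonneg n hs)]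
    exact (tb_H_mono n).monotoneOn hs ⟨by norm_num, le_rfl⟩ hs.2
  rw [tsum_zero] at h1
  have h2 : Tendsto (fun s : ℝ => rexp (π ^ 2 * s)) (nhdsWithin 0 (Ioi 0)) (nhds (rexp (π ^ 2 * 0))) :=
    ((by fun_prop : Continuous fun s : ℝ => rexp (π ^ 2 * s)).tendsto 0).mono_left nhdsWithin_le_nhds
  have h3 := h2.mul (h1.const_mul (2 * π ^ 2 * √π)⁻¹)
  rw [mul_zero (2 * π ^ 2 * √π)⁻¹, mul_zero (rexp _)] at h3
  have h4 : Tendsto (fun t : ℝ => t / 2) (nhdsWithin 0 (Ioi 0)) (nhdsWithin 0 (Ioi 0)) := by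
    apply tendsto_nhdsWithin_of_tendsto_nhds_of_eventually_within
    · have := ((by fun_prop : Continuous fun t : ℝ => t / 2).tendsto 0)
      rw [zero_div] at this
      exact this.mono_left nhdsWithin_le_nhds
    · filter_upwards [self_mem_nhdsWithin] with t ht
      exact half_pos (show (0 : ℝ) < t from ht)
  refine (h3.comp h4).congr' ?_
  filter_upwards [self_mem_nhdsWithin] with t ht
  have := tb_dual (half_pos (show (0 : ℝ) < t from ht))
  rw [mul_div_cancel₀ t two_ne_zero] at this
  rw [this]
  rfl

/-- the summand of thetaBar -/
noncomputable def tbT (n : ℕ) (t : ℝ) : ℝ :=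
  (-1 : ℝ)^n * ((n : ℝ) + 1)^2 * Real.exp (-(π^2) * (((n : ℝ) + 1)^2 - 1) * t / 2)

lemma tb_norm_T (n : ℕ) (t : ℝ) :
    ‖tbT n t‖ = ((n : ℝ) + 1)^2 * Real.exp (-(π^2) * (((n : ℝ) + 1)^2 - 1) * t / 2) := by
  rw [tbT, norm_mul, norm_mul, norm_pow, norm_neg, norm_one, one_pow, one_mul,
    Real.norm_of_nonneg (by positivity), Real.norm_of_nonneg (by positivity)]

lemma tb_summable_norm_T {t : ℝ} (ht : 0 < t) : Summable fun n => ‖tbT n t‖ := by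
  refine ((tb_summable_nat 2 (half_pos ht)).mul_left (rexp (π ^ 2 * t / 2))).congr fun n => ?_
  rw [tb_norm_T, mul_left_comm, ← Real.exp_add]
  congr 2
  ring

lemma tb_tendsto_one : Tendsto thetaBar atTop (nhds 1) := by
  have h1 : Tendsto (fun t => ∑' n, tbT n t) atTop (nhds (∑' n : ℕ, if n = 0 then (1 : ℝ) else 0)) := by
    apply tendsto_tsum_of_dominated_convergence (bound := fun n => ‖tbT n 1‖)
      (tb_summable_norm_T one_pos)
    · intro n
      rcases Nat.eq_zero_or_pos n with rfl | hn
      · simp [tbT]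
      · rw [if_neg hn.ne']
        have hn' : (1 : ℝ) ≤ n := by exact_mod_cast hn
        have hc : 0 < π ^ 2 * (((n : ℝ) + 1) ^ 2 - 1) / 2 := by
          have := pi_pos
          have : (0 : ℝ) < ((n : ℝ) + 1) ^ 2 - 1 := by nlinarith
          positivity
        have := (Real.tendsto_exp_neg_atTop_nhds_zero.comp
          (tendsto_id.const_mul_atTop hc)).const_mul ((-1 : ℝ)^n * ((n : ℝ) + 1)^2)
        rw [mul_zero] at this
        refine this.congr fun t => ?_
        simp only [Function.comp, id, tbT]
        congr 2
        ring
    · filter_upwards [eventually_ge_atTop 1] with t ht n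
      rw [tb_norm_T, tb_norm_T]
      apply mul_le_mul_of_nonneg_left _ (by positivity)
      apply Real.exp_le_exp.2
      have : 0 ≤ π ^ 2 * (((n : ℝ) + 1) ^ 2 - 1) := by
        have : (0 : ℝ) ≤ ((n : ℝ) + 1) ^ 2 - 1 := by nlinarith [(Nat.cast_nonneg n : (0 : ℝ) ≤ n)]
        positivity
      nlinarith
  rw [tsum_ite_eq] at h1
  exact h1

lemma tb_pair_mono (N : ℝ) (hN : 2 ≤ N) : StrictMonoOn (fun t : ℝ =>
    -(N ^ 2 * rexp (-(π ^ 2) * (N ^ 2 - 1) * t / 2))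
      + (N + 1) ^ 2 * rexp (-(π ^ 2) * ((N + 1) ^ 2 - 1) * t / 2)) (Ici (2 / 15)) := by
  apply strictMonoOn_of_deriv_pos (convex_Ici _) (by fun_prop)
  intro t ht
  rw [interior_Ici] at ht
  have ht : 2 / 15 < t := ht
  have hd (c : ℝ) : HasDerivAt (fun t : ℝ => rexp (-(π ^ 2) * c * t / 2))
      (rexp (-(π ^ 2) * c * t / 2) * (-(π ^ 2) * c / 2)) t := by
    have := (((hasDerivAt_id t).const_mul (-(π ^ 2) * c)).div_const 2).exp
    simpa using this
  have h := (((hd (N ^ 2 - 1)).const_mul (N ^ 2)).neg).add ((hd ((N + 1) ^ 2 - 1)).const_mul ((N + 1) ^ 2))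
  have h' := h.deriv
  have e : deriv (fun t : ℝ =>
    -(N ^ 2 * rexp (-(π ^ 2) * (N ^ 2 - 1) * t / 2))
      + (N + 1) ^ 2 * rexp (-(π ^ 2) * ((N + 1) ^ 2 - 1) * t / 2)) t = _ := h'
  rw [e]
  have hE : rexp (-(π ^ 2) * ((N + 1) ^ 2 - 1) * t / 2) =
      rexp (-(π ^ 2) * (N ^ 2 - 1) * t / 2) * rexp (-(π ^ 2 * (2 * N + 1) * t / 2)) := by
    rw [← Real.exp_add]; congr 1; ring
  have hx : 3 ≤ π ^ 2 * (2 * N + 1) * t / 2 := by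
    have h9 : 9 ≤ π ^ 2 := by nlinarith [pi_gt_three]
    have h45 : 45 ≤ π ^ 2 * (2 * N + 1) := by nlinarith
    nlinarith
  have h8 : rexp (-(π ^ 2 * (2 * N + 1) * t / 2)) ≤ 1 / 8 := by
    rw [Real.exp_neg, one_div]
    apply inv_anti₀ (by norm_num)
    have := Real.quadratic_le_exp_of_nonneg (x := π ^ 2 * (2 * N + 1) * t / 2) (by linarith)
    nlinarith
  rw [hE]
  have hEp := Real.exp_pos (-(π ^ 2) * (N ^ 2 - 1) * t / 2)
  generalize rexp (-(π ^ 2) * (N ^ 2 - 1) * t / 2) = E at *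
  generalize rexp (-(π ^ 2 * (2 * N + 1) * t / 2)) = G at *
  have hpi := pi_pos
  have e2 : -(N ^ 2 * (E * (-π ^ 2 * (N ^ 2 - 1) / 2))) + (N + 1) ^ 2 * (E * G * (-π ^ 2 * ((N + 1) ^ 2 - 1) / 2))
    = E * π ^ 2 / 2 * N * (N + 1) * (N * (N - 1) - G * ((N + 1) * (N + 2))) := by ring
  rw [e2]
  have : 0 < N * (N - 1) - G * ((N + 1) * (N + 2)) := by
    have : G * ((N + 1) * (N + 2)) ≤ 1 / 8 * ((N + 1) * (N + 2)) := by gcongr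
    nlinarith
  positivity

lemma tb_mono_large : StrictMonoOn thetaBar (Ici (2 / 15)) := by
  have hrep : ∀ t : ℝ, 2 / 15 ≤ t → HasSum (fun m : ℕ => tbT (2 * m + 1) t + tbT (2 * m + 2) t) (thetaBar t - 1) := by
    intro t ht
    have hS : Summable fun n => tbT n t := (tb_summable_norm_T (by linarith)).of_norm
    have h1 : HasSum (fun n => tbT (n + 1) t) (thetaBar t - 1) := by
      have := (hasSum_nat_add_iff' 1).2 hS.hasSum
      have e0 : tbT 0 t = 1 := by simp [tbT]
      rw [Finset.sum_range_one, e0] at this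
      exact this
    have he : Summable fun m : ℕ => tbT (2 * m + 1) t :=
      h1.summable.comp_injective (i := fun m : ℕ => 2 * m) (fun a b h => by simpa using h)
    have ho : Summable fun m : ℕ => tbT (2 * m + 1 + 1) t :=
      h1.summable.comp_injective (i := fun m : ℕ => 2 * m + 1) (fun a b h => by simpa using h)
    have e := (HasSum.even_add_odd (f := fun n => tbT (n + 1) t) he.hasSum ho.hasSum).unique h1
    rw [← e]
    exact he.hasSum.add ho.hasSum
  intro x hx y hy hxy
  have hp (m : ℕ) : tbT (2 * m + 1) x + tbT (2 * m + 2) x < tbT (2 * m + 1) y + tbT (2 * m + 2) y := by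
    have := tb_pair_mono (2 * m + 2) (by nlinarith [(Nat.cast_nonneg m : (0 : ℝ) ≤ m)]) hx hy hxy
    have e1 : (-1 : ℝ) ^ (2 * m + 1) = -1 := by rw [pow_succ, pow_mul]; simp
    have e2 : (-1 : ℝ) ^ (2 * m + 2) = 1 := by rw [pow_add, pow_mul]; simp
    simp only [tbT, e1, e2]
    have c1 : (((2 * m + 1 : ℕ) : ℝ) + 1) = 2 * m + 2 := by push_cast; ring
    have c2 : (((2 * m + 2 : ℕ) : ℝ) + 1) = 2 * m + 2 + 1 := by push_cast; ring
    rw [c1, c2]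
    simpa using this
  have := hasSum_lt (i := 0) (fun m => (hp m).le) (hp 0) (hrep x hx) (hrep y hy)
  linarith

/-- `θ̄` is strictly increasing on `(0,∞)`, tends to `0` as `t → 0+` and to `1`
as `t → ∞`. -/
theorem stmt3 :
    StrictMonoOn thetaBar (Set.Ioi (0:ℝ)) ∧
    Filter.Tendsto thetaBar (nhdsWithin 0 (Set.Ioi 0)) (nhds 0) ∧
    Filter.Tendsto thetaBar Filter.atTop (nhds 1) := by
  refine ⟨?_, tb_tendsto_zero, tb_tendsto_one⟩
  have h := tb_mono_small.union tb_mono_large (c := 2 / 15)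
    ⟨⟨by norm_num, le_rfl⟩, fun x hx => hx.2⟩ isLeast_Ici
  rwa [Ioc_union_Ici_eq_Ioi (by norm_num)] at h
end

section
/- For every t > 0 there exists a constant C ∈ (0,1] such that for all x, y ∈ [0,1]: 2C·sin(πx)·sin(πy) ≤ p^1_t(x,y) ≤ 2C^{−1}·sin(πx)·sin(πy). -/
open Real MeasureTheory Set Filter

/-- Transition density of Brownian motion killed upon exiting `(0,a)`:
`p^a_t(x,y) = (2/a)·∑_{n≥1} exp(−π²n²t/(2a²))·sin(πnx/a)·sin(πny/a)`. -/
noncomputable def pker (a t x y : ℝ) : ℝ :=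
  (2/a) * ∑' n : ℕ, Real.exp (-(π^2) * ((n : ℝ) + 1)^2 * t / (2 * a^2)) *
    Real.sin (π * ((n : ℝ) + 1) * x / a) * Real.sin (π * ((n : ℝ) + 1) * y / a)


namespace Aux

/-- reciprocal of the finite `q`-Pochhammer symbol. -/
noncomputable def r (q : ℝ) (k : ℕ) : ℝ := ∏ i ∈ Finset.range k, (1 - q ^ (2 * (i + 1)))⁻¹

/-- `r` extended by zero to the integers. -/
noncomputable def R (q : ℝ) (k : ℤ) : ℝ := if k < 0 then 0 else r q k.toNat

lemma pow_lt {q : ℝ} (h0 : 0 < q) (h1 : q < 1) (i : ℕ) : q ^ (2 * (i + 1)) < 1 :=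
  pow_lt_one₀ h0.le h1 (by positivity)

lemma r_pos {q : ℝ} (h0 : 0 < q) (h1 : q < 1) (k : ℕ) : 0 < r q k := by
  unfold r
  refine Finset.prod_pos fun i _ => inv_pos.2 ?_
  linarith [pow_lt h0 h1 i]

lemma r_succ (q : ℝ) (k : ℕ) : r q (k + 1) = r q k * (1 - q ^ (2 * (k + 1)))⁻¹ := by
  unfold r
  rw [Finset.prod_range_succ]

lemma r_mono {q : ℝ} (h0 : 0 < q) (h1 : q < 1) : Monotone (r q) := by
  refine monotone_nat_of_le_succ fun k => ?_
  rw [r_succ]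
  refine le_mul_of_one_le_right (r_pos h0 h1 k).le ?_
  have := pow_lt h0 h1 k
  have h2 : 0 < q ^ (2 * (k + 1)) := by positivity
  exact (one_le_inv₀ (by linarith)).2 (by linarith)

lemma r_bdd {q : ℝ} (h0 : 0 < q) (h1 : q < 1) : ∃ B, ∀ k, r q k ≤ B := by
  have hs : Summable (fun i : ℕ => q ^ i * (1 - q)⁻¹) :=
    (summable_geometric_of_lt_one h0.le h1).mul_right _
  refine ⟨Real.exp (∑' i : ℕ, q ^ i * (1 - q)⁻¹), fun k => ?_⟩
  have h3 : ∀ i : ℕ, 0 ≤ q ^ i * (1 - q)⁻¹ := fun i =>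
    mul_nonneg (by positivity) (inv_nonneg.2 (by linarith))
  calc r q k ≤ ∏ i ∈ Finset.range k, Real.exp (q ^ i * (1 - q)⁻¹) := by
        unfold r
        refine Finset.prod_le_prod (fun i _ => inv_nonneg.2 (by linarith [pow_lt h0 h1 i])) ?_
        intro i _
        have hx := pow_lt h0 h1 i
        have e1 : q ^ (2 * (i + 1)) ≤ q ^ i := pow_le_pow_of_le_one h0.le h1.le (by omega)
        have e2 : q ^ (2 * (i + 1)) ≤ q := by
          simpa using pow_le_pow_of_le_one h0.le h1.le (show 1 ≤ 2 * (i + 1) by omega)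
        have e3 : (1 - q ^ (2 * (i + 1)))⁻¹ = 1 + q ^ (2 * (i + 1)) * (1 - q ^ (2 * (i + 1)))⁻¹ := by
          have : 1 - q ^ (2 * (i + 1)) ≠ 0 := by linarith
          field_simp
          ring
        have e4 : (1 - q ^ (2 * (i + 1)))⁻¹ ≤ (1 - q)⁻¹ :=
          inv_anti₀ (by linarith) (by linarith)
        have e5 : q ^ (2 * (i + 1)) * (1 - q ^ (2 * (i + 1)))⁻¹ ≤ q ^ i * (1 - q)⁻¹ :=
          mul_le_mul e1 e4 (inv_nonneg.2 (by linarith)) (by positivity)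
        linarith [Real.add_one_le_exp (q ^ i * (1 - q)⁻¹)]
    _ = Real.exp (∑ i ∈ Finset.range k, q ^ i * (1 - q)⁻¹) := (Real.exp_sum _ _).symm
    _ ≤ _ := Real.exp_le_exp.2 (hs.sum_le_tsum _ fun i _ => h3 i)

lemma exists_lim {q : ℝ} (h0 : 0 < q) (h1 : q < 1) :
    ∃ L, 0 < L ∧ (∀ k, r q k ≤ L) ∧ Tendsto (r q) atTop (nhds L) := by
  obtain ⟨B, hB⟩ := r_bdd h0 h1
  have hb : BddAbove (Set.range (r q)) := ⟨B, by rintro _ ⟨k, rfl⟩; exact hB k⟩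
  refine ⟨⨆ k, r q k, ?_, fun k => le_ciSup hb k, tendsto_atTop_ciSup (r_mono h0 h1) hb⟩
  exact lt_of_lt_of_le (r_pos h0 h1 0) (le_ciSup hb 0)

lemma R_rec {q : ℝ} (h0 : 0 < q) (h1 : q < 1) (k : ℤ) :
    R q (k - 1) = (1 - q ^ (2 * k)) * R q k := by
  rcases lt_trichotomy k 0 with h | h | h
  · simp [R, h, show k - 1 < 0 by omega]
  · subst h; simp [R]
  · obtain ⟨n, rfl⟩ : ∃ n : ℕ, k = n + 1 := ⟨(k - 1).toNat, by omega⟩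
    have e : (1 - q ^ (2 * ((n : ℤ) + 1))) = 1 - q ^ (2 * (n + 1)) := by
      rw [← zpow_natCast q (2 * (n + 1))]; push_cast; rfl
    have : 1 - q ^ (2 * (n + 1)) ≠ 0 := by linarith [pow_lt h0 h1 n]
    have e2 : ((n : ℤ) + 1).toNat = n + 1 := by omega
    simp only [R, e, e2, show ¬ ((n : ℤ) + 1 < 0) by omega, if_false, r_succ]
    rw [show (n : ℤ) + 1 - 1 = n by ring, if_neg (by omega), Int.toNat_natCast]
    field_simp

lemma R_nonneg {q : ℝ} (h0 : 0 < q) (h1 : q < 1) (k : ℤ) : 0 ≤ R q k := by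
  unfold R; split_ifs
  · exact le_rfl
  · exact (r_pos h0 h1 _).le

lemma R_le {q L : ℝ} (hL : 0 < L) (h : ∀ k, r q k ≤ L) (k : ℤ) : R q k ≤ L := by
  unfold R; split_ifs
  · exact hL.le
  · exact h _

lemma R_nat (q : ℝ) (k : ℕ) : R q k = r q k := by simp [R]

/-- coefficients -/
noncomputable def A (q : ℝ) (N : ℕ) (j : ℤ) : ℝ := q ^ (j ^ 2) * R q (N - j) * R q (N + j)

lemma A_rec {q : ℝ} (h0 : 0 < q) (h1 : q < 1) (N : ℕ) (j : ℤ) :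
    (1 - q ^ (2 * (2 * N + 1))) * (1 - q ^ (2 * (2 * N + 2))) * A q (N + 1) j =
      (1 + q ^ (4 * N + 2)) * A q N j + q ^ (2 * N + 1) * (A q N (j - 1) + A q N (j + 1)) := by
  have hq : q ≠ 0 := h0.ne'
  have a1 := R_rec h0 h1 (N + 1 - j)
  have a2 := R_rec h0 h1 (N - j)
  have b1 := R_rec h0 h1 (N + 1 + j)
  have b2 := R_rec h0 h1 (N + j)
  rw [show (N : ℤ) + 1 - j - 1 = N - j by ring] at a1
  rw [show (N : ℤ) + 1 + j - 1 = N + j by ring] at b1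
  have z1 : q ^ (2 * ((N : ℤ) + 1 - j)) = q ^ (2 * N) * q ^ 2 / q ^ (2 * j) := by
    rw [show 2 * ((N : ℤ) + 1 - j) = ((2 * N : ℕ) : ℤ) + (2 : ℕ) - 2 * j by push_cast; ring,
      zpow_sub₀ hq, zpow_add₀ hq, zpow_natCast, zpow_natCast]
  have z2 : q ^ (2 * ((N : ℤ) - j)) = q ^ (2 * N) / q ^ (2 * j) := by
    rw [show 2 * ((N : ℤ) - j) = ((2 * N : ℕ) : ℤ) - 2 * j by push_cast; ring,
      zpow_sub₀ hq, zpow_natCast]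
  have z3 : q ^ (2 * ((N : ℤ) + 1 + j)) = q ^ (2 * N) * q ^ 2 * q ^ (2 * j) := by
    rw [show 2 * ((N : ℤ) + 1 + j) = ((2 * N : ℕ) : ℤ) + (2 : ℕ) + 2 * j by push_cast; ring,
      zpow_add₀ hq, zpow_add₀ hq, zpow_natCast, zpow_natCast]
  have z4 : q ^ (2 * ((N : ℤ) + j)) = q ^ (2 * N) * q ^ (2 * j) := by
    rw [show 2 * ((N : ℤ) + j) = ((2 * N : ℕ) : ℤ) + 2 * j by push_cast; ring,
      zpow_add₀ hq, zpow_natCast]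
  have s1 : q ^ ((j - 1) ^ 2) = q ^ (j ^ 2) * q / q ^ (2 * j) := by
    rw [show (j - 1) ^ 2 = j ^ 2 + 1 - 2 * j by ring, zpow_sub₀ hq, zpow_add₀ hq, zpow_one]
  have s2 : q ^ ((j + 1) ^ 2) = q ^ (j ^ 2) * q * q ^ (2 * j) := by
    rw [show (j + 1) ^ 2 = j ^ 2 + 1 + 2 * j by ring, zpow_add₀ hq, zpow_add₀ hq, zpow_one]
  rw [z1] at a1
  rw [z2, a1] at a2
  rw [z3] at b1
  rw [z4, b1] at b2
  unfold A
  rw [s1, s2, show (N : ℤ) - (j - 1) = N + 1 - j by ring,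
    show (N : ℤ) + (j - 1) = N + j - 1 by ring, show (N : ℤ) - (j + 1) = N - j - 1 by ring,
    show (N : ℤ) + (j + 1) = N + 1 + j by ring, a2, b2, a1, b1]
  push_cast
  have hu : q ^ (2 * j) ≠ 0 := zpow_ne_zero _ hq
  have hs : q ^ (4 * N + 2) = (q ^ (2 * N)) ^ 2 * q ^ 2 := by ring
  have hs1 : q ^ (2 * (2 * N + 1)) = (q ^ (2 * N)) ^ 2 * q ^ 2 := by ring
  have hs2 : q ^ (2 * (2 * N + 2)) = (q ^ (2 * N)) ^ 2 * q ^ 4 := by ring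
  have hs3 : q ^ (2 * N + 1) = q ^ (2 * N) * q := by ring
  rw [hs, hs1, hs2, hs3]
  generalize q ^ (2 * j) = u at *
  generalize q ^ (2 * N) = s at *
  generalize q ^ (j ^ 2) = g at *
  generalize R q (N + 1 - j) = X at *
  generalize R q (N + 1 + j) = Y at *
  field_simp
  ring

/-- finite product -/
noncomputable def P (q : ℝ) (N : ℕ) (c : ℝ) : ℝ :=
  ∏ m ∈ Finset.range N, (1 + 2 * q ^ (2 * m + 1) * c + q ^ (4 * m + 2))

lemma A_zero (q : ℝ) (j : ℤ) : A q 0 j = if j = 0 then 1 else 0 := by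
  unfold A
  split_ifs with h
  · subst h; simp [R, r]
  · rcases lt_or_gt_of_ne h with h | h
    · simp [R, h]
    · simp [R, h]

open Complex in
lemma hasSum_A {q : ℝ} (h0 : 0 < q) (h1 : q < 1) (z : ℝ) (N : ℕ) :
    HasSum (fun j : ℤ => (A q N j : ℂ) * (Complex.exp (z * I)) ^ j)
      ((r q (2 * N) * P q N (Real.cos z) : ℝ) : ℂ) := by
  set w := Complex.exp (z * I) with hw
  have hw0 : w ≠ 0 := Complex.exp_ne_zero _
  have hc : w + w⁻¹ = ((2 * Real.cos z : ℝ) : ℂ) := by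
    rw [hw, ← Complex.exp_neg]; push_cast; rw [Complex.two_cos]; congr 2; ring
  induction N with
  | zero =>
    convert hasSum_ite_eq (0 : ℤ) (1 : ℂ) using 1
    · funext j
      rw [A_zero]
      split_ifs with h
      · subst h; simp
      · simp
    · simp [r, P]
  | succ N ih =>
    have e1 := ((Equiv.subRight (1 : ℤ)).hasSum_iff.2 ih).mul_left w
    have e2 := ((Equiv.addRight (1 : ℤ)).hasSum_iff.2 ih).mul_left w⁻¹
    have e3 := (ih.mul_left (1 + (q : ℂ) ^ (4 * N + 2))).add
      ((e1.add e2).mul_left ((q : ℂ) ^ (2 * N + 1)))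
    have d1 : 1 - q ^ (2 * (2 * N + 1)) ≠ 0 := by
      have := pow_lt h0 h1 (2 * N); linarith
    have d2 : 1 - q ^ (2 * (2 * N + 2)) ≠ 0 := by
      have := pow_lt h0 h1 (2 * N + 1)
      rw [show 2 * N + 1 + 1 = 2 * N + 2 by ring] at this; linarith
    have e4 := e3.mul_left
      ((((1 - q ^ (2 * (2 * N + 1))) * (1 - q ^ (2 * (2 * N + 2))) : ℝ) : ℂ)⁻¹)
    have d3 : (((1 - q ^ (2 * (2 * N + 1))) * (1 - q ^ (2 * (2 * N + 2))) : ℝ) : ℂ) ≠ 0 :=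
      Complex.ofReal_ne_zero.2 (mul_ne_zero d1 d2)
    convert e4 using 1
    · rfl
    · funext j
      rw [eq_inv_mul_iff_mul_eq₀ d3]
      have := congrArg (fun x : ℝ => (x : ℂ) * w ^ j) (A_rec h0 h1 N j)
      rw [← mul_assoc, ← Complex.ofReal_mul, this]
      simp only [Function.comp, Equiv.subRight_apply, Equiv.coe_addRight]
      rw [zpow_sub_one₀ hw0, zpow_add_one₀ hw0]
      push_cast
      field_simp
    · rw [eq_inv_mul_iff_mul_eq₀ d3]
      have f1 : r q (2 * (N + 1)) = r q (2 * N) * (1 - q ^ (2 * (2 * N + 1)))⁻¹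
          * (1 - q ^ (2 * (2 * N + 2)))⁻¹ := by
        rw [show 2 * (N + 1) = 2 * N + 1 + 1 by ring, r_succ, r_succ]
      have f2 : P q (N + 1) (Real.cos z) = P q N (Real.cos z) *
          (1 + 2 * q ^ (2 * N + 1) * Real.cos z + q ^ (4 * N + 2)) := by
        unfold P; rw [Finset.prod_range_succ]
      rw [← add_mul, hc, f1, f2]
      norm_cast
      field_simp
      ring

lemma summable_sq {q : ℝ} (h0 : 0 < q) (h1 : q < 1) : Summable (fun j : ℤ => q ^ (j ^ 2)) := by
  have hs : Summable (fun n : ℕ => q ^ (n ^ 2)) := by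
    refine Summable.of_nonneg_of_le (fun n => by positivity) (fun n => ?_)
      (summable_geometric_of_lt_one h0.le h1)
    exact pow_le_pow_of_le_one h0.le h1.le (Nat.le_self_pow two_ne_zero n)
  refine Summable.of_nat_of_neg ?_ ?_
  · exact_mod_cast hs
  · simp only [neg_sq]; exact_mod_cast hs

open Complex in
lemma tendsto_P {q L : ℝ} (h0 : 0 < q) (h1 : q < 1) (hL : 0 < L) (hb : ∀ k, r q k ≤ L)
    (hl : Tendsto (r q) atTop (nhds L)) (z : ℝ) :
    Tendsto (fun N => r q (2 * N) * P q N (Real.cos z)) atTop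
      (nhds (L ^ 2 * ∑' j : ℤ, q ^ (j ^ 2) * Real.cos (j * z))) := by
  have hre : ∀ (N : ℕ), ∑' j : ℤ, A q N j * Real.cos (j * z) = r q (2 * N) * P q N (Real.cos z) := by
    intro N
    have := Complex.hasSum_re (hasSum_A h0 h1 z N)
    rw [Complex.ofReal_re] at this
    rw [← this.tsum_eq]
    congr 1
    funext j
    rw [Complex.re_ofReal_mul, ← Complex.exp_int_mul, ← mul_assoc]
    congr 1
    rw [show (j : ℂ) * z = ((j * z : ℝ) : ℂ) by push_cast; rfl, Complex.exp_ofReal_mul_I_re]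
  simp_rw [← hre]
  rw [← tsum_mul_left]
  refine tendsto_tsum_of_dominated_convergence (bound := fun j : ℤ => q ^ (j ^ 2) * L ^ 2)
    ((summable_sq h0 h1).mul_right _) ?_ ?_
  · intro j
    have t1 : Tendsto (fun N : ℕ => R q (N - j)) atTop (nhds L) := by
      have : Tendsto (fun N : ℕ => ((N : ℤ) - j).toNat) atTop atTop := by
        refine tendsto_atTop.2 fun b => ?_
        filter_upwards [eventually_ge_atTop (b + j.toNat)] with N hN
        omega
      refine (hl.comp this).congr' ?_
      filter_upwards [eventually_ge_atTop j.toNat] with N hN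
      simp only [R, Function.comp]
      rw [if_neg (by omega)]
    have t2 : Tendsto (fun N : ℕ => R q (N + j)) atTop (nhds L) := by
      have : Tendsto (fun N : ℕ => ((N : ℤ) + j).toNat) atTop atTop := by
        refine tendsto_atTop.2 fun b => ?_
        filter_upwards [eventually_ge_atTop (b + (-j).toNat)] with N hN
        omega
      refine (hl.comp this).congr' ?_
      filter_upwards [eventually_ge_atTop (-j).toNat] with N hN
      simp only [R, Function.comp]
      rw [if_neg (by omega)]
    have := (((tendsto_const_nhds (x := q ^ (j ^ 2))).mul t1).mul t2).mul
      (tendsto_const_nhds (x := Real.cos (j * z)))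
    unfold A
    convert this using 2
    ring
  · refine Eventually.of_forall fun N j => ?_
    have g0 : 0 ≤ q ^ (j ^ 2) := by positivity
    have p1 := R_nonneg h0 h1 (N - j)
    have p2 := R_nonneg h0 h1 (N + j)
    have u1 := R_le hL hb (N - j)
    have u2 := R_le hL hb (N + j)
    rw [norm_mul, Real.norm_eq_abs, Real.norm_eq_abs]
    unfold A
    rw [abs_of_nonneg (by positivity)]
    calc q ^ (j ^ 2) * R q (N - j) * R q (N + j) * |Real.cos (j * z)|
        ≤ q ^ (j ^ 2) * R q (N - j) * R q (N + j) * 1 := by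
          gcongr; exact Real.abs_cos_le_one _
      _ = q ^ (j ^ 2) * (R q (N - j) * R q (N + j)) := by ring
      _ ≤ q ^ (j ^ 2) * L ^ 2 := by
          rw [pow_two L]; gcongr

lemma factor_ge {q : ℝ} (h0 : 0 < q) (h1 : q < 1) (m : ℕ) {v : ℝ} (hv : -1 ≤ v) :
    (1 - q ^ (2 * m + 1)) ^ 2 ≤ 1 + 2 * q ^ (2 * m + 1) * v + q ^ (4 * m + 2) := by
  have : 0 < q ^ (2 * m + 1) := by positivity
  have e : q ^ (4 * m + 2) = (q ^ (2 * m + 1)) ^ 2 := by ring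
  rw [e]; nlinarith

lemma P_diff {q L : ℝ} (h0 : 0 < q) (h1 : q < 1) (hL : 0 < L) (hb : ∀ k, r q k ≤ L)
    {u v : ℝ} (hv : -1 ≤ v) (huv : v ≤ u) (N : ℕ) :
    2 * q * (u - v) * (L⁻¹) ^ 2 ≤ P q (N + 1) u - P q (N + 1) v := by
  set F : ℝ → ℝ := fun c => ∏ m ∈ Finset.range N,
    (1 + 2 * q ^ (2 * (m + 1) + 1) * c + q ^ (4 * (m + 1) + 2)) with hF
  have hP : ∀ c, P q (N + 1) c = F c * (1 + 2 * q * c + q ^ 2) := by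
    intro c; unfold P; rw [Finset.prod_range_succ']; simp [hF]
  have hmono : F v ≤ F u := by
    refine Finset.prod_le_prod (fun m _ => ?_) (fun m _ => ?_)
    · exact (sq_nonneg _).trans (factor_ge h0 h1 (m + 1) hv)
    · gcongr
  have hlow : (L⁻¹) ^ 2 ≤ F v := by
    have h2 : L⁻¹ ≤ (r q N)⁻¹ := inv_anti₀ (r_pos h0 h1 N) (hb N)
    have h3 : 0 ≤ L⁻¹ := inv_nonneg.2 hL.le
    calc (L⁻¹) ^ 2 ≤ ((r q N)⁻¹) ^ 2 := by gcongr
      _ = ∏ m ∈ Finset.range N, (1 - q ^ (2 * (m + 1))) ^ 2 := by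
          unfold r; rw [← Finset.prod_inv_distrib, ← Finset.prod_pow]; simp
      _ ≤ F v := by
          refine Finset.prod_le_prod (fun m _ => sq_nonneg _) (fun m _ => ?_)
          refine le_trans ?_ (factor_ge h0 h1 (m + 1) hv)
          have k1 := pow_lt h0 h1 m
          have k2 : q ^ (2 * (m + 1) + 1) ≤ q ^ (2 * (m + 1)) :=
            pow_le_pow_of_le_one h0.le h1.le (by omega)
          exact pow_le_pow_left₀ (by linarith) (by linarith) 2
  rw [hP, hP]
  have hfu : 0 ≤ 1 + 2 * q * u + q ^ 2 := by nlinarith [sq_nonneg (1 - q)]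
  have i1 : F v * (1 + 2 * q * u + q ^ 2) ≤ F u * (1 + 2 * q * u + q ^ 2) := by gcongr
  have i2 : 2 * q * (u - v) * (L⁻¹) ^ 2 ≤ 2 * q * (u - v) * F v := by
    have : 0 ≤ u - v := by linarith
    gcongr
  nlinarith

lemma theta_diff {q : ℝ} (h0 : 0 < q) (h1 : q < 1) : ∃ c, 0 < c ∧ ∀ z z' : ℝ,
    Real.cos z' ≤ Real.cos z → c * (Real.cos z - Real.cos z') ≤
      (∑' j : ℤ, q ^ (j ^ 2) * Real.cos (j * z)) - ∑' j : ℤ, q ^ (j ^ 2) * Real.cos (j * z') := by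
  obtain ⟨L, hL, hb, hl⟩ := exists_lim h0 h1
  refine ⟨(L ^ 2)⁻¹ * (r q 0 * (2 * q * (L⁻¹) ^ 2)), by have := r_pos h0 h1 0; positivity, ?_⟩
  intro z z' hz
  have hd := (tendsto_P h0 h1 hL hb hl z).sub (tendsto_P h0 h1 hL hb hl z')
  have hd' := hd.comp (tendsto_add_atTop_nat 1)
  have := ge_of_tendsto' hd' (b := r q 0 * (2 * q * (Real.cos z - Real.cos z') * (L⁻¹) ^ 2)) ?_
  · rw [← mul_sub] at this
    rw [mul_assoc, inv_mul_le_iff₀ (by positivity)]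
    refine le_trans (le_of_eq ?_) this
    ring
  · intro N
    simp only [Function.comp]
    rw [← mul_sub]
    have := P_diff h0 h1 hL hb (Real.neg_one_le_cos z') hz N
    have h3 := r_mono h0 h1 (Nat.zero_le (2 * (N + 1)))
    have h4 : 0 ≤ 2 * q * (Real.cos z - Real.cos z') * (L⁻¹) ^ 2 := by
      have : 0 ≤ Real.cos z - Real.cos z' := by linarith
      positivity
    exact mul_le_mul h3 this h4 (r_pos h0 h1 _).le

lemma abs_sin_le (x : ℝ) (n : ℕ) : |Real.sin (n * x)| ≤ n * |Real.sin x| := by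
  induction n with
  | zero => simp
  | succ n ih =>
    push_cast
    rw [add_mul, one_mul, Real.sin_add, add_mul, one_mul]
    refine (abs_add_le _ _).trans (add_le_add ?_ ?_)
    · rw [abs_mul]
      exact (mul_le_of_le_one_right (abs_nonneg _) (Real.abs_cos_le_one _)).trans ih
    · rw [abs_mul]
      exact mul_le_of_le_one_left (abs_nonneg _) (Real.abs_cos_le_one _)

lemma summable_bd {q : ℝ} (h0 : 0 < q) (h1 : q < 1) :
    Summable (fun n : ℕ => q ^ ((n + 1) ^ 2) * ((n : ℝ) + 1) ^ 2) := by
  have h : Summable (fun n : ℕ => (n : ℝ) ^ 2 * q ^ n) :=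
    summable_pow_mul_geometric_of_norm_lt_one 2 (by rwa [Real.norm_of_nonneg h0.le])
  have h' := (summable_nat_add_iff 1).2 h
  refine Summable.of_nonneg_of_le (fun n => by positivity) (fun n => ?_) h'
  push_cast
  rw [mul_comm]
  gcongr ?_ * ?_
  exact pow_le_pow_of_le_one h0.le h1.le (Nat.le_self_pow two_ne_zero _)

lemma pker_eq {t q : ℝ} (hq : q = Real.exp (-(π ^ 2) * t / 2)) (x y : ℝ) :
    pker 1 t x y = 2 * ∑' n : ℕ, q ^ ((n + 1) ^ 2) *
      Real.sin ((n + 1 : ℕ) * (π * x)) * Real.sin ((n + 1 : ℕ) * (π * y)) := by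
  unfold pker
  rw [div_one]
  congr 2
  funext n
  rw [hq, ← Real.exp_nat_mul]
  congr 2
  · congr 1
    push_cast; ring
  · congr 1
    push_cast; ring
  · congr 1
    push_cast; ring

lemma theta_eq {q : ℝ} (h0 : 0 < q) (h1 : q < 1) (a b : ℝ) :
    (∑' j : ℤ, q ^ (j ^ 2) * Real.cos (j * (a - b))) - ∑' j : ℤ, q ^ (j ^ 2) * Real.cos (j * (a + b))
      = 4 * ∑' n : ℕ, q ^ ((n + 1) ^ 2) *
      Real.sin ((n + 1 : ℕ) * a) * Real.sin ((n + 1 : ℕ) * b) := by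
  have hs : ∀ z : ℝ, Summable (fun j : ℤ => q ^ (j ^ 2) * Real.cos (j * z)) := by
    intro z
    refine Summable.of_norm_bounded (summable_sq h0 h1) fun j => ?_
    rw [norm_mul, Real.norm_eq_abs, abs_of_nonneg (by positivity), Real.norm_eq_abs]
    exact mul_le_of_le_one_right (by positivity) (Real.abs_cos_le_one _)
  rw [← (hs _).tsum_sub (hs _)]
  have hsub := (hs (a - b)).sub (hs (a + b))
  have hterm : ∀ j : ℤ, q ^ (j ^ 2) * Real.cos (j * (a - b)) - q ^ (j ^ 2) * Real.cos (j * (a + b))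
      = 2 * (q ^ (j ^ 2) * Real.sin (j * a) * Real.sin (j * b)) := by
    intro j
    rw [mul_sub, mul_add, Real.cos_sub, Real.cos_add]; ring
  simp_rw [hterm] at hsub ⊢
  rw [tsum_int_eq_zero_add_two_mul_tsum_pnat (fun j => by simp) hsub]
  have := tsum_pnat_eq_tsum_succ (f := fun n : ℕ =>
    2 * (q ^ ((n : ℤ) ^ 2) * Real.sin ((n : ℤ) * a) * Real.sin ((n : ℤ) * b)))
  simp only [Int.cast_natCast] at this
  simp only [Int.cast_natCast, Int.cast_zero, zero_mul, Real.sin_zero, mul_zero, zero_add]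
  rw [this, tsum_mul_left, two_nsmul, ← add_mul]
  norm_num
  congr 1

end Aux

/-- For every `t > 0` there is a constant `C ∈ (0,1]` with
`2C·sin(πx)·sin(πy) ≤ p¹_t(x,y) ≤ 2C⁻¹·sin(πx)·sin(πy)` on `[0,1]²`. -/
theorem stmt4 (t : ℝ) (ht : 0 < t) :
    ∃ C : ℝ, 0 < C ∧ C ≤ 1 ∧ ∀ x ∈ Set.Icc (0:ℝ) 1, ∀ y ∈ Set.Icc (0:ℝ) 1,
      2 * C * Real.sin (π * x) * Real.sin (π * y) ≤ pker 1 t x y ∧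
      pker 1 t x y ≤ 2 * C⁻¹ * Real.sin (π * x) * Real.sin (π * y) := by
  obtain ⟨q, hq⟩ : ∃ q, q = Real.exp (-(π ^ 2) * t / 2) := ⟨_, rfl⟩
  have h0 : 0 < q := hq ▸ Real.exp_pos _
  have h1 : q < 1 := by
    rw [hq, Real.exp_lt_one_iff]
    have : 0 < π ^ 2 * t := by positivity
    linarith
  obtain ⟨c, hc, hth⟩ := Aux.theta_diff h0 h1
  have hsb := Aux.summable_bd h0 h1
  set K := ∑' n : ℕ, q ^ ((n + 1) ^ 2) * ((n : ℝ) + 1) ^ 2 with hK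
  have hKpos : 0 < K := hsb.tsum_pos (fun n => by positivity) 0 (by simpa using h0)
  refine ⟨min (min 1 (c / 2)) K⁻¹, by positivity, (min_le_left _ _).trans (min_le_left _ _), ?_⟩
  set C := min (min 1 (c / 2)) K⁻¹ with hC
  have hCpos : 0 < C := by positivity
  have hC1 : C ≤ c / 2 := (min_le_left _ _).trans (min_le_right _ _)
  have hC2 : K ≤ C⁻¹ := (le_inv_comm₀ hKpos hCpos).2 (min_le_right _ _)
  intro x hx y hy
  have sx : 0 ≤ Real.sin (π * x) := Real.sin_nonneg_of_nonneg_of_le_pi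
    (mul_nonneg pi_pos.le hx.1) (by nlinarith [pi_pos, hx.2])
  have sy : 0 ≤ Real.sin (π * y) := Real.sin_nonneg_of_nonneg_of_le_pi
    (mul_nonneg pi_pos.le hy.1) (by nlinarith [pi_pos, hy.2])
  have sxy := mul_nonneg sx sy
  rw [Aux.pker_eq hq]
  constructor
  · have hcos : Real.cos (π * x - π * y) - Real.cos (π * x + π * y)
        = 2 * (Real.sin (π * x) * Real.sin (π * y)) := by
      rw [Real.cos_sub, Real.cos_add]; ring
    have h := hth (π * x - π * y) (π * x + π * y) (by linarith)
    rw [Aux.theta_eq h0 h1, hcos] at h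
    have := mul_le_mul_of_nonneg_right hC1 sxy
    nlinarith
  · have hle : ∑' n : ℕ, q ^ ((n + 1) ^ 2) * Real.sin ((n + 1 : ℕ) * (π * x)) *
        Real.sin ((n + 1 : ℕ) * (π * y)) ≤ K * (Real.sin (π * x) * Real.sin (π * y)) := by
      have hbd : ∀ n : ℕ, ‖q ^ ((n + 1) ^ 2) * Real.sin ((n + 1 : ℕ) * (π * x)) *
          Real.sin ((n + 1 : ℕ) * (π * y))‖ ≤ q ^ ((n + 1) ^ 2) * ((n : ℝ) + 1) ^ 2 *
          (Real.sin (π * x) * Real.sin (π * y)) := by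
        intro n
        have b1 := Aux.abs_sin_le (π * x) (n + 1)
        have b2 := Aux.abs_sin_le (π * y) (n + 1)
        rw [abs_of_nonneg sx] at b1
        rw [abs_of_nonneg sy] at b2
        rw [norm_mul, norm_mul, Real.norm_eq_abs, Real.norm_eq_abs, Real.norm_eq_abs,
          abs_of_nonneg (by positivity : 0 ≤ q ^ ((n + 1) ^ 2)), mul_assoc]
        calc _ ≤ q ^ ((n + 1) ^ 2) * ((((n + 1 : ℕ) : ℝ) * Real.sin (π * x)) *
              (((n + 1 : ℕ) : ℝ) * Real.sin (π * y))) := by gcongr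
          _ = _ := by push_cast; ring
      have hS := hsb.mul_right (Real.sin (π * x) * Real.sin (π * y))
      rw [hK, ← tsum_mul_right]
      exact (Summable.of_norm_bounded hS hbd).tsum_le_tsum
        (fun n => (le_abs_self _).trans (hbd n)) hS
    have := mul_le_mul_of_nonneg_right hC2 sxy
    nlinarith
end

section
/- For all a > 0, t > 0 and x, y ∈ [0,a]: |e^{π²t/(2a²)}·p^a_t(x,y) − (2/a)·sin(πx/a)·sin(πy/a)| ≤ E_{t/a²}·(2/a)·sin(πx/a)·sin(πy/a). -/
open Real MeasureTheory Set Filter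

/-- `E_t = π²·∑_{n≥2} n²·exp(−π²(n²−1)t/2)` (for `t > 0`). -/
noncomputable def Efun (t : ℝ) : ℝ :=
  π^2 * ∑' n : ℕ, ((n : ℝ) + 2)^2 * Real.exp (-(π^2) * (((n : ℝ) + 2)^2 - 1) * t / 2)

theorem abs_sin_nat_mul_le_aux (n : ℕ) (u : ℝ) :
    |Real.sin ((n : ℝ) * u)| ≤ n * |Real.sin u| := by
  induction n with
  | zero => simp
  | succ k ih =>
    have e : ((k + 1 : ℕ) : ℝ) * u = k * u + u := by push_cast; ring
    rw [e, Real.sin_add]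
    have h1 := abs_add_le (Real.sin (k * u) * Real.cos u) (Real.cos (k * u) * Real.sin u)
    rw [abs_mul, abs_mul] at h1
    have h2 := mul_le_mul_of_nonneg_left (Real.abs_cos_le_one u) (abs_nonneg (Real.sin (k * u)))
    have h3 := mul_le_mul_of_nonneg_right (Real.abs_cos_le_one (k * u)) (abs_nonneg (Real.sin u))
    push_cast
    linarith

theorem summable_aux (s : ℝ) (hs : 0 < s) :
    Summable fun n : ℕ => ((n : ℝ) + 2)^2 * Real.exp (-s * (((n : ℝ) + 2)^2 - 1)) := by
  have h := (summable_nat_add_iff 2).2 (Real.summable_pow_mul_exp_neg_nat_mul 2 hs)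
  refine Summable.of_nonneg_of_le (fun n => by positivity) (fun n => ?_) h
  push_cast
  have hn : (0 : ℝ) ≤ n := Nat.cast_nonneg n
  have : -s * (((n : ℝ) + 2)^2 - 1) ≤ -s * ((n : ℝ) + 2) := by
    have : (n : ℝ) + 2 ≤ ((n : ℝ) + 2)^2 - 1 := by nlinarith
    nlinarith
  gcongr

/-- The density `p^a_t` is close to its first Fourier mode, with error `E_{t/a²}`. -/
theorem stmt5 (a : ℝ) (ha : 0 < a) (t : ℝ) (ht : 0 < t)
    (x : ℝ) (hx : x ∈ Set.Icc 0 a) (y : ℝ) (hy : y ∈ Set.Icc 0 a) :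
    |Real.exp (π^2 * t / (2 * a^2)) * pker a t x y -
        (2/a) * Real.sin (π * x / a) * Real.sin (π * y / a)| ≤
      Efun (t / a^2) * ((2/a) * Real.sin (π * x / a) * Real.sin (π * y / a)) := by
  have hu : 0 ≤ Real.sin (π * x / a) := by
    apply Real.sin_nonneg_of_nonneg_of_le_pi
    · have := hx.1
      positivity
    · rw [div_le_iff₀ ha]
      exact mul_le_mul_of_nonneg_left hx.2 Real.pi_pos.le
  have hv : 0 ≤ Real.sin (π * y / a) := by
    apply Real.sin_nonneg_of_nonneg_of_le_pi
    · have := hy.1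
      positivity
    · rw [div_le_iff₀ ha]
      exact mul_le_mul_of_nonneg_left hy.2 Real.pi_pos.le
  have hs : 0 < π^2 * t / (2 * a^2) := by positivity
  have eE : Efun (t / a^2) = π^2 * ∑' n : ℕ, ((n : ℝ) + 2)^2 *
      Real.exp (-(π^2 * t / (2 * a^2)) * (((n : ℝ) + 2)^2 - 1)) := by
    unfold Efun
    congr 1
    refine tsum_congr fun n => ?_
    congr 2
    field_simp
  have eP : Real.exp (π^2 * t / (2 * a^2)) * pker a t x y = (2/a) * ∑' n : ℕ,
      Real.exp (-(π^2 * t / (2 * a^2)) * (((n : ℝ) + 1)^2 - 1)) *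
      Real.sin (((n + 1 : ℕ) : ℝ) * (π * x / a)) *
      Real.sin (((n + 1 : ℕ) : ℝ) * (π * y / a)) := by
    unfold pker
    rw [mul_left_comm, ← tsum_mul_left]
    congr 1
    refine tsum_congr fun n => ?_
    rw [← mul_assoc, ← mul_assoc, ← Real.exp_add]
    congr 2
    · congr 1
      field_simp
      ring
    · push_cast
      ring_nf
    · push_cast
      ring_nf
  rw [eE, eP]
  generalize π^2 * t / (2 * a^2) = s at *
  generalize π * x / a = u at *
  generalize π * y / a = v at *
  set f : ℕ → ℝ := fun n => Real.exp (-s * (((n : ℝ) + 1)^2 - 1)) *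
      Real.sin (((n + 1 : ℕ) : ℝ) * u) * Real.sin (((n + 1 : ℕ) : ℝ) * v) with hf
  set g : ℕ → ℝ := fun n => ((n : ℝ) + 2)^2 * Real.exp (-s * (((n : ℝ) + 2)^2 - 1)) with hg
  have hgs : Summable g := summable_aux s hs
  have hb : ∀ n, ‖f (n + 1)‖ ≤ g n * (Real.sin u * Real.sin v) := by
    intro n
    have h1 := abs_sin_nat_mul_le_aux (n + 1 + 1) u
    have h2 := abs_sin_nat_mul_le_aux (n + 1 + 1) v
    rw [abs_of_nonneg hu] at h1
    rw [abs_of_nonneg hv] at h2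
    have h3 := mul_le_mul h1 h2 (abs_nonneg _) (by positivity)
    have h4 := mul_le_mul_of_nonneg_left h3 (Real.exp_pos (-s * (((n : ℝ) + 2)^2 - 1))).le
    have e : ((n + 1 : ℕ) : ℝ) + 1 = n + 2 := by push_cast; ring
    have e2 : ((n + 1 + 1 : ℕ) : ℝ) = n + 2 := by push_cast; ring
    simp only [hf, hg]
    rw [e, Real.norm_eq_abs, abs_mul, abs_mul, Real.abs_exp]
    rw [e2] at h4 ⊢
    linarith
  have hgs' := hgs.mul_right (Real.sin u * Real.sin v)
  have hfs1 : Summable fun n => f (n + 1) := Summable.of_norm_bounded hgs' hb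
  have hfs : Summable f := (summable_nat_add_iff 1).1 hfs1
  have hbd := tsum_of_norm_bounded hgs'.hasSum hb
  rw [tsum_mul_right] at hbd
  have f0 : f 0 = Real.sin u * Real.sin v := by simp [hf]
  rw [hfs.tsum_eq_zero_add, f0]
  have e3 : 2 / a * (Real.sin u * Real.sin v + ∑' n, f (n + 1)) -
      2 / a * Real.sin u * Real.sin v = 2 / a * ∑' n, f (n + 1) := by ring
  rw [e3, abs_mul, abs_of_pos (by positivity : 0 < 2 / a)]
  have hG : 0 ≤ ∑' n, g n := tsum_nonneg fun n => by simp only [hg]; positivity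
  have hpi : (1 : ℝ) ≤ π^2 := by nlinarith [Real.pi_gt_three]
  have hsv : 0 ≤ Real.sin u * Real.sin v := mul_nonneg hu hv
  rw [Real.norm_eq_abs] at hbd
  calc 2 / a * |∑' n, f (n + 1)| ≤ 2 / a * ((∑' n, g n) * (Real.sin u * Real.sin v)) := by gcongr
    _ = 1 * ((∑' n, g n) * (2 / a * (Real.sin u * Real.sin v))) := by ring
    _ ≤ π^2 * ((∑' n, g n) * (2 / a * (Real.sin u * Real.sin v))) := by gcongr
    _ = _ := by ring
end

section
/- For all a > 0 and x, y ∈ [0,a], the Green function of Brownian motion killed upon exiting (0,a) satisfies ∫_0^∞ p^a_t(x,y) dt = (2/a)·min(x,y)·(a − max(x,y)). -/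
open Real MeasureTheory Set Filter

lemma aux_int (c : ℝ) (hc : 0 < c) :
    IntegrableOn (fun t : ℝ => Real.exp (-c * t)) (Set.Ioi 0) ∧
    ∫ t in Set.Ioi (0:ℝ), Real.exp (-c * t) = 1 / c := by
  refine ⟨integrableOn_exp_mul_Ioi (by linarith) 0, ?_⟩
  rw [integral_exp_mul_Ioi (by linarith) 0]
  field_simp
  simp

lemma aux_cos (u : ℝ) (hu : u ∈ Set.Icc (0:ℝ) 1) :
    HasSum (fun n : ℕ => 1 / ((n : ℝ) + 1)^2 * Real.cos (2 * π * ((n : ℝ) + 1) * u))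
      (π^2 * (u^2 - u + 6⁻¹)) := by
  have h := hasSum_one_div_nat_pow_mul_cos (k := 1) one_ne_zero hu
  have h2 := (hasSum_nat_add_iff' 1).mpr h
  have e : (Polynomial.map (algebraMap ℚ ℝ) (Polynomial.bernoulli (2 * 1))).eval u
      = u^2 - u + 6⁻¹ := bernoulliFun_two u
  rw [e] at h2
  convert! h2 using 1
  · funext n
    push_cast
    norm_num
  · norm_num [Nat.factorial, Finset.sum_range_one, -mul_eq_mul_right_iff]
    ring

lemma aux_sum (a : ℝ) (ha : 0 < a) (x y : ℝ)
    (hx : x ∈ Set.Icc 0 a) (hy : y ∈ Set.Icc 0 a) :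
    HasSum (fun n : ℕ => 1 / (π^2 * ((n : ℝ) + 1)^2 / (2 * a^2)) *
      (Real.sin (π * ((n : ℝ) + 1) * x / a) * Real.sin (π * ((n : ℝ) + 1) * y / a)))
      (min x y * (a - max x y)) := by
  wlog hxy : y ≤ x generalizing x y
  · have := this y x hy hx (le_of_not_ge hxy)
    rw [min_comm, max_comm]
    convert this using 3
    ring
  obtain ⟨hx0, hxa⟩ := hx
  obtain ⟨hy0, hya⟩ := hy
  have h1 := aux_cos ((x - y) / (2 * a))
    ⟨by apply div_nonneg <;> linarith, by rw [div_le_one (by positivity)]; linarith⟩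
  have h2 := aux_cos ((x + y) / (2 * a))
    ⟨by apply div_nonneg <;> linarith, by rw [div_le_one (by positivity)]; linarith⟩
  have h3 := (h1.sub h2).mul_left (a^2 / π^2)
  rw [min_eq_right hxy, max_eq_left hxy]
  convert! h3 using 1
  · funext n
    have e1 : 2 * π * ((n : ℝ) + 1) * ((x - y) / (2 * a)) =
      π * ((n : ℝ) + 1) * x / a - π * ((n : ℝ) + 1) * y / a := by field_simp
    have e2 : 2 * π * ((n : ℝ) + 1) * ((x + y) / (2 * a)) =
      π * ((n : ℝ) + 1) * x / a + π * ((n : ℝ) + 1) * y / a := by field_simp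
    rw [e1, e2, Real.cos_sub, Real.cos_add]
    have : (n : ℝ) + 1 ≠ 0 := by positivity
    field_simp
    ring
  · field_simp
    ring

theorem stmt6 (a : ℝ) (ha : 0 < a) (x y : ℝ)
    (hx : x ∈ Set.Icc 0 a) (hy : y ∈ Set.Icc 0 a) :
    ∫ t in Set.Ioi (0:ℝ), pker a t x y = (2/a) * min x y * (a - max x y) := by
  have hs := aux_sum a ha x y hx hy
  have hc : ∀ n : ℕ, 0 < π^2 * ((n : ℝ) + 1)^2 / (2 * a^2) := fun n => by positivity
  set c : ℕ → ℝ := fun n => π^2 * ((n : ℝ) + 1)^2 / (2 * a^2) with hcdef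
  set s : ℕ → ℝ := fun n =>
    Real.sin (π * ((n : ℝ) + 1) * x / a) * Real.sin (π * ((n : ℝ) + 1) * y / a) with hsdef
  have hp : ∀ t, pker a t x y = (2 / a) * ∑' n, Real.exp (-c n * t) * s n := by
    intro t
    unfold pker
    congr 2
    funext n
    rw [mul_assoc]
    congr 2
    simp only [hcdef]
    ring
  simp only [hp]
  rw [integral_const_mul, mul_assoc]
  congr 1
  have hi : ∀ n, Integrable (fun t => Real.exp (-c n * t) * s n)
      (volume.restrict (Set.Ioi (0:ℝ))) := fun n =>
    (aux_int (c n) (hc n)).1.mul_const (s n)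
  have hn : Summable fun n => ∫ t in Set.Ioi (0:ℝ), ‖Real.exp (-c n * t) * s n‖ := by
    refine hs.summable.abs.congr fun n => ?_
    have : ∀ t : ℝ, ‖Real.exp (-c n * t) * s n‖ = Real.exp (-c n * t) * |s n| := fun t => by
      rw [norm_mul, Real.norm_eq_abs, Real.norm_eq_abs, Real.abs_exp]
    simp only [this]
    rw [integral_mul_const, (aux_int (c n) (hc n)).2, abs_mul,
      abs_of_pos (one_div_pos.mpr (hc n))]
  have h := hasSum_integral_of_summable_integral_norm hi hn
  refine h.unique ?_
  convert! hs using 1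
  funext n
  rw [integral_mul_const, (aux_int (c n) (hc n)).2]
end

section
/- There exists a constant C > 0 such that for all x ∈ [1/20, 1] and all t > 0: |e^{π²t/2}·θ'(x,t) + π·sin(πx)·θ̄(t)| ≤ C·(1−x)², where θ' denotes the partial derivative of θ in its first variable. -/
open Real MeasureTheory Set Filter

/-- second-order Taylor estimate -/
lemma taylor2 (f f' f'' : ℝ → ℝ) (s : Set ℝ) (hs : Convex ℝ s) (M : ℝ)
    (h1 : ∀ u ∈ s, HasDerivAt f (f' u) u) (h2 : ∀ u ∈ s, HasDerivAt f' (f'' u) u)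
    (hM : ∀ u ∈ s, |f'' u| ≤ M) (m v : ℝ) (hm : m ∈ s) (hv : v ∈ s) :
    |f v - f m - f' m * (v - m)| ≤ M * (v - m)^2 := by
  have hM0 : 0 ≤ M := (abs_nonneg _).trans (hM m hm)
  have hseg : segment ℝ m v ⊆ s := hs.segment_subset hm hv
  have e1 : ∀ u ∈ segment ℝ m v, |f' u - f' m| ≤ M * |v - m| := by
    intro u hu
    have := hs.norm_image_sub_le_of_norm_hasDerivWithin_le
      (fun x hx => (h2 x hx).hasDerivWithinAt) hM hm (hseg hu)
    simp only [Real.norm_eq_abs] at this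
    refine this.trans (mul_le_mul_of_nonneg_left ?_ hM0)
    rw [segment_eq_uIcc] at hu
    have := Set.abs_sub_left_of_mem_uIcc hu
    exact this
  have := (convex_segment (𝕜 := ℝ) m v).norm_image_sub_le_of_norm_hasDerivWithin_le
    (f := fun u => f u - f' m * u) (f' := fun u => f' u - f' m) (C := M * |v - m|)
    (fun x hx => by
      have := (h1 x (hseg hx)).sub ((hasDerivAt_id x).const_mul (f' m))
      simp only [id, mul_one] at this
      exact this.hasDerivWithinAt) e1 (left_mem_segment ℝ m v) (right_mem_segment ℝ m v)
  simp only [Real.norm_eq_abs] at this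
  rw [mul_assoc, abs_mul_abs_self] at this
  calc _ = |f v - f' m * v - (f m - f' m * m)| := by congr 1; ring
    _ ≤ _ := this
    _ = _ := by ring

lemma sin_est (z : ℝ) : |Real.sin z - z| ≤ z^2 := by
  have := taylor2 Real.sin Real.cos (fun u => -Real.sin u) Set.univ convex_univ 1
    (fun u _ => Real.hasDerivAt_sin u) (fun u _ => Real.hasDerivAt_cos u)
    (fun u _ => by rw [abs_neg]; exact Real.abs_sin_le_one u) 0 z trivial trivial
  simpa using this

lemma sin_n_est (n : ℕ) (a : ℝ) :
    |Real.sin ((n+1) * a) - (n+1) * Real.sin a| ≤ 2 * ((n:ℝ)+1)^2 * a^2 := by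
  have h1 := sin_est ((n+1) * a)
  have h2 := sin_est a
  have hn : (0:ℝ) ≤ n := n.cast_nonneg
  have e : Real.sin ((n+1) * a) - (n+1) * Real.sin a
      = (Real.sin ((n+1) * a) - (n+1)*a) - (n+1) * (Real.sin a - a) := by ring
  rw [e]
  refine (abs_sub _ _).trans ?_
  rw [abs_mul, abs_of_nonneg (by positivity : (0:ℝ) ≤ n+1)]
  have : ((n:ℝ)+1) * |Real.sin a - a| ≤ (n+1) * a^2 := by gcongr
  nlinarith [sq_nonneg a, mul_nonneg hn (sq_nonneg a), mul_nonneg (mul_nonneg hn hn) (sq_nonneg a)]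

lemma summ (k : ℕ) (t : ℝ) (ht : 0 < t) :
    Summable (fun n : ℕ => ((n:ℝ)+1)^k * Real.exp (-(π^2) * (((n : ℝ) + 1)^2 - 1) * t / 2)) := by
  have h := Real.summable_pow_mul_exp_neg_nat_mul k (r := π^2 * t / 2) (by positivity)
  have h2 := ((summable_nat_add_iff 1).2 h).mul_right (Real.exp (π^2 * t / 2))
  refine h2.of_nonneg_of_le (fun n => by positivity) fun n => ?_
  push_cast
  rw [mul_assoc ((( n:ℝ)+1)^k), ← Real.exp_add]
  gcongr
  have : 0 ≤ π^2 * t := by positivity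
  have hn : (0:ℝ) ≤ n := n.cast_nonneg
  nlinarith [mul_nonneg this hn, mul_nonneg this (mul_nonneg hn hn)]

lemma exp_split (n : ℕ) (t : ℝ) : Real.exp (π^2 * t / 2) *
    Real.exp (-(π^2) * ((n : ℝ) + 1)^2 * t / 2) =
    Real.exp (-(π^2) * (((n : ℝ) + 1)^2 - 1) * t / 2) := by
  rw [← Real.exp_add]; congr 1; ring

lemma summ' (k : ℕ) (t : ℝ) (ht : 0 < t) :
    Summable (fun n : ℕ => ((n:ℝ)+1)^k * Real.exp (-(π^2) * ((n : ℝ) + 1)^2 * t / 2)) := by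
  refine ((summ k t ht).mul_left (Real.exp (-(π^2 * t / 2)))).congr fun n => ?_
  rw [← exp_split, Real.exp_neg]
  field_simp

lemma deriv_theta (t : ℝ) (ht : 0 < t) (x : ℝ) :
    HasDerivAt (fun y => thetaFn y t)
      (∑' n : ℕ, -(π * ((n:ℝ)+1)) * Real.exp (-(π^2) * ((n : ℝ) + 1)^2 * t / 2) *
        Real.sin (π * ((n : ℝ) + 1) * x)) x := by
  unfold thetaFn
  refine HasDerivAt.const_add _ ?_
  refine hasDerivAt_tsum (𝕜 := ℝ) (F := ℝ)
    (g := fun (n : ℕ) (y : ℝ) => Real.exp (-(π^2) * ((n : ℝ) + 1)^2 * t / 2) *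
      Real.cos (π * ((n : ℝ) + 1) * y))
    (g' := fun (n : ℕ) (y : ℝ) => -(π * ((n:ℝ)+1)) * Real.exp (-(π^2) * ((n : ℝ) + 1)^2 * t / 2) *
        Real.sin (π * ((n : ℝ) + 1) * y)) (u := fun n : ℕ => π * (((n:ℝ)+1)^1 *
    Real.exp (-(π^2) * ((n : ℝ) + 1)^2 * t / 2))) ((summ' 1 t ht).mul_left _) (y₀ := 0)
    (fun n y => ?_) (fun n y => ?_) ?_ x
  · have h := (((hasDerivAt_id y).const_mul (π * ((n : ℝ) + 1))).cos).const_mul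
      (Real.exp (-(π^2) * ((n : ℝ) + 1)^2 * t / 2))
    refine h.congr_deriv ?_
    simp only [id]
    ring
  · rw [Real.norm_eq_abs, abs_mul, abs_mul, abs_neg, abs_of_nonneg (by positivity : 0 ≤ π * ((n:ℝ)+1)),
      abs_of_nonneg (Real.exp_nonneg _), pow_one, ← mul_assoc]
    exact mul_le_of_le_one_right (by positivity) (Real.abs_sin_le_one _)
  · simpa using summ' 0 t ht

lemma sin_refl (n : ℕ) (x : ℝ) : Real.sin (π * ((n : ℝ) + 1) * x)
    = (-1)^n * Real.sin (((n:ℝ)+1) * (π * (1 - x))) := by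
  have : π * ((n : ℝ) + 1) * x = ((n+1 : ℕ) : ℝ) * π - ((n:ℝ)+1) * (π * (1 - x)) := by
    push_cast; ring
  rw [this, Real.sin_nat_mul_pi_sub, pow_succ]; ring

lemma sin_refl1 (x : ℝ) : Real.sin (π * x) = Real.sin (π * (1 - x)) := by
  have : π * x = π - π * (1 - x) := by ring
  rw [this, Real.sin_pi_sub]

lemma lemA (t0 : ℝ) (ht0 : 0 < t0) : ∃ C : ℝ, 0 < C ∧ ∀ t, t0 ≤ t → ∀ x : ℝ,
    |Real.exp (π^2 * t / 2) * deriv (fun y => thetaFn y t) x +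
          π * Real.sin (π * x) * thetaBar t| ≤ C * (1 - x)^2 := by
  refine ⟨∑' n : ℕ, 2 * π^3 * (((n:ℝ)+1)^3 * Real.exp (-(π^2) * (((n : ℝ) + 1)^2 - 1) * t0 / 2)),
    ?_, ?_⟩
  · refine ((summ 3 t0 ht0).mul_left _).tsum_pos (fun n => by positivity) 0 (by positivity)
  intro t htt x
  have ht : 0 < t := ht0.trans_le htt
  rw [(deriv_theta t ht x).deriv, thetaBar, ← tsum_mul_left, ← tsum_mul_left, ← Summable.tsum_add,
    ← tsum_mul_right, ← Real.norm_eq_abs]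
  · refine tsum_of_norm_bounded (((summ 3 t0 ht0).mul_left _).mul_right _).hasSum fun n => ?_
    have hE : Real.exp (-(π^2) * (((n : ℝ) + 1)^2 - 1) * t / 2) ≤
        Real.exp (-(π^2) * (((n : ℝ) + 1)^2 - 1) * t0 / 2) := by
      apply Real.exp_le_exp.2
      have hn : (0:ℝ) ≤ n := n.cast_nonneg
      have : 0 ≤ π^2 * (((n : ℝ) + 1)^2 - 1) := by
        have : (0:ℝ) ≤ ((n : ℝ) + 1)^2 - 1 := by nlinarith
        positivity
      nlinarith
    have e : Real.exp (π^2 * t / 2) * (-(π * ((n:ℝ)+1)) *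
        Real.exp (-(π^2) * ((n : ℝ) + 1)^2 * t / 2) * Real.sin (π * ((n : ℝ) + 1) * x)) +
        π * Real.sin (π * x) * ((-1 : ℝ)^n * ((n : ℝ) + 1)^2 *
          Real.exp (-(π^2) * (((n : ℝ) + 1)^2 - 1) * t / 2)) =
        (-1)^n * (-(π * ((n:ℝ)+1) * Real.exp (-(π^2) * (((n : ℝ) + 1)^2 - 1) * t / 2) *
        (Real.sin (((n:ℝ)+1) * (π * (1 - x))) - (n+1) * Real.sin (π * (1 - x))))) := by
      rw [sin_refl, sin_refl1, ← exp_split]; ring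
    rw [e, Real.norm_eq_abs, abs_mul, abs_pow, abs_neg, abs_one, one_pow, one_mul, abs_neg, abs_mul,
      abs_of_nonneg (by positivity : 0 ≤ π * ((n:ℝ)+1) *
        Real.exp (-(π^2) * (((n : ℝ) + 1)^2 - 1) * t / 2))]
    calc _ ≤ π * ((n:ℝ)+1) * Real.exp (-(π^2) * (((n : ℝ) + 1)^2 - 1) * t0 / 2) *
          (2 * ((n:ℝ)+1)^2 * (π * (1-x))^2) := by
          gcongr
          exact sin_n_est n _
      _ = _ := by ring
  · refine Summable.mul_left _ ?_
    refine ((summ' 1 t ht).mul_left π).of_norm_bounded fun n => ?_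
    rw [Real.norm_eq_abs, abs_mul, abs_mul, abs_neg, abs_of_nonneg (by positivity : 0 ≤ π * ((n:ℝ)+1)),
      abs_of_nonneg (Real.exp_nonneg _), pow_one, ← mul_assoc]
    exact mul_le_of_le_one_right (by positivity) (Real.abs_sin_le_one _)
  · refine Summable.mul_left _ ?_
    refine (summ 2 t ht).of_norm_bounded fun n => ?_
    rw [Real.norm_eq_abs, abs_mul, abs_mul, abs_pow, abs_neg, abs_one, one_pow, one_mul,
      abs_of_nonneg (Real.exp_nonneg _), abs_of_nonneg (by positivity)]

noncomputable def phi (t u : ℝ) : ℝ := u * Real.exp (-u^2 / (2*t))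
noncomputable def phi1 (t u : ℝ) : ℝ := (1 - u^2/t) * Real.exp (-u^2 / (2*t))
noncomputable def phi2 (t u : ℝ) : ℝ := (-3*u/t + u^3/t^2) * Real.exp (-u^2 / (2*t))

lemma hexp (t u : ℝ) : HasDerivAt (fun u : ℝ => Real.exp (-u^2 / (2*t)))
    (Real.exp (-u^2 / (2*t)) * (-(2*u) / (2*t))) u := by
  have h := (((hasDerivAt_pow 2 u).neg).div_const (2*t)).exp
  simpa using h

lemma hphi (t u : ℝ) (ht : 0 < t) : HasDerivAt (phi t) (phi1 t u) u := by
  have h := (hasDerivAt_id u).mul (hexp t u)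
  refine h.congr_deriv ?_
  simp only [id, phi1]
  field_simp
  ring

lemma hphi1 (t u : ℝ) (ht : 0 < t) : HasDerivAt (phi1 t) (phi2 t u) u := by
  have h := (((hasDerivAt_pow 2 u).div_const t).const_sub 1).mul (hexp t u)
  refine h.congr_deriv ?_
  simp only [phi2]
  field_simp
  push_cast
  ring

lemma exp_bd (s : ℝ) (hs : 0 ≤ s) (k : ℕ) :
    s^k * Real.exp (-s/2) ≤ 2^k * k.factorial := by
  have h := Real.pow_div_factorial_le_exp (s/2) (by positivity) k
  rw [div_le_iff₀ (by positivity), div_pow, div_le_iff₀ (by positivity)] at h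
  have : Real.exp (-s/2) = (Real.exp (s/2))⁻¹ := by rw [← Real.exp_neg]; congr 1; ring
  rw [this, ← div_eq_mul_inv, div_le_iff₀ (Real.exp_pos _)]
  nlinarith

lemma phi1_bd (t u : ℝ) (ht : 0 < t) (hu : 0 < u) :
    (1/t)^2 * |phi1 t u| ≤ 56 / u^4 := by
  obtain ⟨s, hs, hs0⟩ : ∃ s, s = u^2/t ∧ 0 < s := ⟨_, rfl, by positivity⟩
  have hE : Real.exp (-u^2/(2*t)) = Real.exp (-s/2) := by rw [hs]; congr 1; field_simp
  have h2 := exp_bd s hs0.le 2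
  have h3 := exp_bd s hs0.le 3
  norm_num [Nat.factorial] at h2 h3
  rw [phi1, hE, ← hs, abs_mul, abs_of_nonneg (Real.exp_nonneg _), le_div_iff₀ (by positivity)]
  have e : (1/t)^2 * u^4 = s^2 := by rw [hs]; field_simp
  have h1 : |1 - s| ≤ 1 + s := by rw [abs_le]; constructor <;> linarith
  calc _ = s^2 * (|1 - s| * Real.exp (-s/2)) := by rw [← e]; ring
    _ ≤ s^2 * ((1 + s) * Real.exp (-s/2)) := by gcongr
    _ ≤ _ := by linarith

lemma phi2_bd (t u : ℝ) (ht : 0 < t) (hu : 0 < u) :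
    (1/t)^2 * |phi2 t u| ≤ 528 / u^5 := by
  obtain ⟨s, hs, hs0⟩ : ∃ s, s = u^2/t ∧ 0 < s := ⟨_, rfl, by positivity⟩
  have hE : Real.exp (-u^2/(2*t)) = Real.exp (-s/2) := by rw [hs]; congr 1; field_simp
  have h2 := exp_bd s hs0.le 3
  have h3 := exp_bd s hs0.le 4
  norm_num [Nat.factorial] at h2 h3
  have e0 : -3*u/t + u^3/t^2 = (u/t) * (s - 3) := by rw [hs]; field_simp; ring
  rw [phi2, hE, e0, abs_mul, abs_mul, abs_of_nonneg (Real.exp_nonneg _),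
    abs_of_nonneg (by positivity : 0 ≤ u/t), le_div_iff₀ (by positivity)]
  have e : (1/t)^2 * (u/t) * u^5 = s^3 := by rw [hs]; field_simp
  have h1 : |s - 3| ≤ 3 + s := by rw [abs_le]; constructor <;> linarith
  calc _ = s^3 * (|s - 3| * Real.exp (-s/2)) := by rw [← e]; ring
    _ ≤ s^3 * ((3 + s) * Real.exp (-s/2)) := by gcongr
    _ ≤ _ := by linarith

/-- weight -/
noncomputable def wt (t : ℝ) : ℝ := (2/(π*t))^(3/2 : ℝ)

lemma wt_nonneg (t : ℝ) (ht : 0 < t) : 0 ≤ wt t := by unfold wt; positivity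

lemma wt_le (t : ℝ) (ht : 0 < t) (h1 : t ≤ 1) : wt t ≤ (1/t)^2 := by
  unfold wt
  have h : 2/(π*t) ≤ 1/t := by
    rw [div_le_div_iff₀ (by positivity) ht]
    nlinarith [Real.pi_gt_three]
  calc (2/(π*t))^(3/2 : ℝ) ≤ (1/t)^(3/2 : ℝ) := by gcongr
    _ ≤ (1/t)^(2:ℝ) := Real.rpow_le_rpow_of_exponent_le (by rw [le_div_iff₀ ht]; linarith) (by norm_num)
    _ = _ := by norm_cast

lemma term_bd (t : ℝ) (ht : 0 < t) (h1 : t ≤ 1) (k : ℕ) (y : ℝ) (hy : 0 ≤ y) (hy1 : y ≤ 19/20) :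
    |wt t * (phi t (2*k+1-y) - phi t (2*k+1+y)) + 2*y*(wt t * phi1 t (2*k+1))| ≤
      (1056 * 20^5 * (1/((k:ℝ)+1)^2)) * y^2 := by
  have hk : (0:ℝ) ≤ k := k.cast_nonneg
  set m : ℝ := 2*k+1 with hm
  have hm1 : 1 ≤ m := by linarith
  have hw := wt_nonneg t ht
  have T := taylor2 (fun u => wt t * phi t u) (fun u => wt t * phi1 t u) (fun u => wt t * phi2 t u)
    (Set.Ici (m/20)) (convex_Ici _) (528 * 20^5 * (1/((k:ℝ)+1)^2))
    (fun u _ => (hphi t u ht).const_mul _) (fun u _ => (hphi1 t u ht).const_mul _)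
    (fun u hu => by
      have hu : m/20 ≤ u := hu
      have hu0 : 0 < u := by linarith
      rw [abs_mul, abs_of_nonneg hw]
      calc wt t * |phi2 t u| ≤ (1/t)^2 * |phi2 t u| := by gcongr; exact wt_le t ht h1
        _ ≤ 528 / u^5 := phi2_bd t u ht hu0
        _ ≤ 528 / (m/20)^5 := by gcongr
        _ = 528 * 20^5 * (1/m^5) := by field_simp
        _ ≤ _ := by
          gcongr
          calc ((k:ℝ)+1)^2 ≤ m^2 := by gcongr; linarith
            _ ≤ m^5 := pow_le_pow_right₀ hm1 (by norm_num))
  have T1 := T m (m-y) (by simp; linarith) (by simp; linarith)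
  have T2 := T m (m+y) (by simp; linarith) (by simp; linarith)
  rw [abs_le] at T1 T2 ⊢
  constructor <;> nlinarith [T1.1, T1.2, T2.1, T2.2]

lemma summ_inv : Summable (fun k : ℕ => 1/((k:ℝ)+1)^2) := by
  have := (summable_nat_add_iff 1).2 (Real.summable_one_div_nat_pow.2 (by norm_num : 1 < 2))
  simpa using this

lemma phi1_term (t : ℝ) (ht : 0 < t) (h1 : t ≤ 1) (k : ℕ) :
    ‖wt t * phi1 t (2*k+1)‖ ≤ 56 * (1/((k:ℝ)+1)^2) := by
  have hk : (0:ℝ) ≤ k := k.cast_nonneg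
  rw [Real.norm_eq_abs, abs_mul, abs_of_nonneg (wt_nonneg t ht)]
  calc _ ≤ (1/t)^2 * |phi1 t (2*k+1)| := by gcongr; exact wt_le t ht h1
    _ ≤ 56 / (2*k+1)^4 := phi1_bd t _ ht (by positivity)
    _ = 56 * (1/(2*k+1)^4) := by ring
    _ ≤ _ := by
      gcongr
      calc ((k:ℝ)+1)^2 ≤ (2*(k:ℝ)+1)^2 := by gcongr; linarith
        _ ≤ (2*(k:ℝ)+1)^4 := pow_le_pow_right₀ (by linarith) (by norm_num)

/-- Poisson summation -/
lemma poisson (t : ℝ) (ht : 0 < t) (y : ℝ) :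
    HasSum (fun k : ℕ => wt t * (phi t (2*k+1-y) - phi t (2*k+1+y)))
      (-(4/π) * deriv (fun y => thetaFn y t) (1 - y)) := by
  have hx : 0 < 2/(π*t) := by positivity
  have h1 := (HurwitzZeta.hasSum_int_oddKernel ((1-y)/2) hx).nat_add_neg_add_one
  have h2 := HurwitzZeta.hasSum_nat_sinKernel ((1-y)/2) (t := 1/(2/(π*t))) (by positivity)
  have hf := HurwitzZeta.oddKernel_functional_equation (((1-y)/2 : ℝ) : UnitAddCircle) (2/(π*t))
  have h3 : HurwitzZeta.sinKernel (((1-y)/2 : ℝ) : UnitAddCircle) (1/(2/(π*t)))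
      = -(2/π) * deriv (fun y => thetaFn y t) (1 - y) := by
    rw [(deriv_theta t ht (1-y)).deriv, ← h2.tsum_eq, h2.summable.tsum_eq_zero_add,
      ← tsum_mul_left]
    simp only [Nat.cast_zero, mul_zero, zero_mul, zero_add]
    congr 1
    ext n
    have e1 : 2 * π * ((1-y)/2) * ((n+1 : ℕ) : ℝ) = π * ((n:ℝ)+1) * (1-y) := by push_cast; ring
    have e2 : -π * ((n+1 : ℕ) : ℝ)^2 * (1/(2/(π*t))) = -(π^2) * ((n : ℝ) + 1)^2 * t / 2 := by
      push_cast; field_simp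
    rw [e1, e2]
    push_cast
    field_simp
  rw [h3] at hf
  have hw : wt t * HurwitzZeta.oddKernel (((1-y)/2 : ℝ) : UnitAddCircle) (2/(π*t))
      = -(2/π) * deriv (fun y => thetaFn y t) (1 - y) := by
    have : wt t ≠ 0 := by unfold wt; positivity
    rw [hf, ← wt]
    field_simp
  have h4 := (h1.mul_left (wt t)).mul_left 2
  rw [hw] at h4
  have hval : -(4/π) * deriv (fun y => thetaFn y t) (1 - y)
      = 2 * (-(2/π) * deriv (fun y => thetaFn y t) (1 - y)) := by ring
  rw [hval]
  refine h4.congr_fun fun k : ℕ => ?_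
  have e1 : -π * (((k:ℤ):ℝ) + (1-y)/2)^2 * (2/(π*t)) = -(2*(k:ℝ)+1-y)^2/(2*t) := by
    push_cast; field_simp; ring
  have e2 : -π * (((-((k:ℤ)+1) : ℤ):ℝ) + (1-y)/2)^2 * (2/(π*t)) = -(2*(k:ℝ)+1+y)^2/(2*t) := by
    push_cast; field_simp; ring
  rw [e1, e2, phi, phi]
  push_cast
  ring

lemma q_zero (q C : ℝ) (h : ∀ y : ℝ, 0 < y → y ≤ 19/20 → |q * y| ≤ C * y^2) : q = 0 := by
  by_contra hq
  have hq' : 0 < |q| := abs_pos.2 hq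
  set y := min (19/20) (|q|/(2*(|C|+1))) with hy
  have hy0 : 0 < y := by rw [hy]; positivity
  have h1 := h y hy0 (min_le_left _ _)
  have h2 : y ≤ |q|/(2*(|C|+1)) := min_le_right _ _
  rw [le_div_iff₀ (by positivity)] at h2
  rw [abs_mul, abs_of_pos hy0] at h1
  have h3 : |q| ≤ C * y := by
    refine le_of_mul_le_mul_right ?_ hy0
    linarith [h1, (by ring : C * y^2 = C * y * y)]
  have h4 : C * y ≤ |C| * y := by gcongr; exact le_abs_self C
  nlinarith [abs_nonneg C]

lemma lemB : ∃ C : ℝ, 0 < C ∧ ∀ t : ℝ, 0 < t → t ≤ 1 → ∀ y : ℝ, 0 ≤ y → y ≤ 19/20 →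
    |Real.exp (π^2 * t / 2) * deriv (fun y => thetaFn y t) (1 - y) +
          π * Real.sin (π * y) * thetaBar t| ≤ C * y^2 := by
  obtain ⟨D, hD⟩ := summ_inv
  have hD0 : 0 ≤ D := hD.nonneg (fun k => by positivity)
  refine ⟨Real.exp (π^2/2) * (28 * D * π^2 + π/4 * (1056 * 20^5 * D)) + 1, by positivity, ?_⟩
  intro t ht ht1
  obtain ⟨CA, hCA0, hCA⟩ := lemA t ht
  have hS : Summable (fun k : ℕ => wt t * phi1 t (2*k+1)) :=
    (hD.summable.mul_left 56).of_norm_bounded (phi1_term t ht ht1)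
  obtain ⟨a, ha⟩ := hS
  have haD : |a| ≤ 56 * D := by
    rw [← ha.tsum_eq, ← Real.norm_eq_abs]
    exact tsum_of_norm_bounded (hD.mul_left 56) (phi1_term t ht ht1)
  set E := Real.exp (π^2 * t / 2) with hE
  have hE0 : 0 < E := Real.exp_pos _
  have hE1 : E ≤ Real.exp (π^2/2) := by
    apply Real.exp_le_exp.2
    nlinarith [sq_nonneg π]
  set B := thetaBar t with hB
  set g : ℝ → ℝ := fun y => deriv (fun y => thetaFn y t) (1 - y) with hg
  have hR : ∀ y : ℝ, 0 ≤ y → y ≤ 19/20 → |-(4/π) * g y + 2*y*a| ≤ 1056*20^5*D*y^2 := by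
    intro y hy hy1
    have hs := (poisson t ht y).add (ha.mul_left (2*y))
    rw [← Real.norm_eq_abs, hg, ← hs.tsum_eq]
    exact tsum_of_norm_bounded ((hD.mul_left (1056*20^5)).mul_right (y^2))
      (fun k => term_bd t ht ht1 k y hy hy1)
  -- the main decomposition
  have dec : ∀ y, E * g y + π * Real.sin (π*y) * B =
      (E*a*π/2 + π^2*B) * y + π*B*(Real.sin (π*y) - π*y)
        - E*π/4 * (-(4/π) * g y + 2*y*a) := by
    intro y
    field_simp
    ring
  have hq : E*a*π/2 + π^2*B = 0 := by
    apply q_zero _ (CA + |π*B| * π^2 + E*π/4*(1056*20^5*D))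
    intro y hy hy1
    have h1 := hCA t le_rfl (1-y)
    rw [sin_refl1, sub_sub_cancel] at h1
    have h2 := hR y hy.le hy1
    have h3 := sin_est (π*y)
    have e : (E*a*π/2 + π^2*B) * y = (E * g y + π * Real.sin (π*y) * B)
        + (-(π*B*(Real.sin (π*y) - π*y)) + E*π/4 * (-(4/π) * g y + 2*y*a)) := by
      rw [dec]; ring
    rw [e]
    refine (abs_add_le _ _).trans ?_
    have h4 := abs_add_le (-(π*B*(Real.sin (π*y) - π*y))) (E*π/4 * (-(4/π) * g y + 2*y*a))
    rw [abs_neg, abs_mul (π*B), abs_mul (E*π/4), abs_of_pos (by positivity : 0 < E*π/4)] at h4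
    have h5 : |π*B| * |Real.sin (π*y) - π*y| ≤ |π*B| * (π*y)^2 := by gcongr
    have h6 : E*π/4 * |-(4/π) * g y + 2*y*a| ≤ E*π/4 * (1056*20^5*D*y^2) := by gcongr
    have h1' : |E * g y + π * Real.sin (π*y) * B| ≤ CA * y^2 := h1
    linarith
  have hB' : π * B = -(E*a/2) := by
    have : π * (π * B + E*a/2) = 0 := by linarith
    rcases mul_eq_zero.1 this with h | h
    · exact absurd h Real.pi_ne_zero
    · linarith
  intro y hy hy1
  change |E * g y + π * Real.sin (π*y) * B| ≤ _
  rw [dec y, hq, hB', zero_mul, zero_add]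
  refine (abs_sub _ _).trans ?_
  rw [abs_mul (-(E*a/2)), abs_mul (E*π/4), abs_of_pos (by positivity : 0 < E*π/4), abs_neg,
    abs_div, abs_mul, abs_of_pos hE0, abs_two]
  have h2 := hR y hy hy1
  have h3 := sin_est (π*y)
  calc _ ≤ Real.exp (π^2/2) * (56*D) / 2 * (π*y)^2
        + Real.exp (π^2/2) * π / 4 * (1056*20^5*D*y^2) := by gcongr
    _ ≤ _ := by nlinarith [sq_nonneg y]

theorem stmt7 :
    ∃ C : ℝ, 0 < C ∧ ∀ x ∈ Set.Icc (1/20 : ℝ) 1, ∀ t : ℝ, 0 < t →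
      |Real.exp (π^2 * t / 2) * deriv (fun y => thetaFn y t) x +
          π * Real.sin (π * x) * thetaBar t| ≤ C * (1 - x)^2 := by
  obtain ⟨C1, h1, H1⟩ := lemA 1 one_pos
  obtain ⟨C2, h2, H2⟩ := lemB
  refine ⟨C1 + C2, by positivity, fun x hx t ht => ?_⟩
  rcases le_total 1 t with h | h
  · refine (H1 t h x).trans ?_
    gcongr
    linarith
  · have := H2 t ht h (1-x) (by linarith [hx.2]) (by linarith [hx.1])
    rw [sub_sub_cancel, ← sin_refl1] at this
    refine this.trans ?_
    gcongr
    linarith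
end

section
/- There exists a universal constant C such that for every x ∈ [0,1] and every measurable set S ⊆ (0,∞) of finite Lebesgue measure λ(S): |I(x,S) − π·λ(S)·sin(πx)| ≤ C·min( x , E_{inf S}·min(1, λ(S))·sin(πx) ), where min(x, +∞) is interpreted as x when inf S = 0. -/
open Real MeasureTheory Set Filter

/-- Density at time `t` of the first hitting time of `1` before `0` by Brownian
motion started at `x`:
`r_t(x) = π·∑_{n≥1} (−1)^{n+1}·n·exp(−π²n²t/2)·sin(πnx)`. -/
noncomputable def rfun (t x : ℝ) : ℝ :=
  π * ∑' n : ℕ, (-1 : ℝ)^n * ((n : ℝ) + 1) *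
    Real.exp (-(π^2) * ((n : ℝ) + 1)^2 * t / 2) * Real.sin (π * ((n : ℝ) + 1) * x)

/-- `I(x,S) = ∫_S e^{π²s/2}·r_s(x) ds`. -/
noncomputable def Ifun (x : ℝ) (S : Set ℝ) : ℝ :=
  ∫ s in S, Real.exp (π^2 * s / 2) * rfun s x

open HurwitzZeta in
lemma rfun_hasSum (x : ℝ) {t : ℝ} (ht : 0 < t) :
    HasSum (fun n : ℕ => (-1 : ℝ)^n * ((n : ℝ) + 1) *
      Real.exp (-(π^2) * ((n : ℝ) + 1)^2 * t / 2) * Real.sin (π * ((n : ℝ) + 1) * x))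
      (sinKernel (((1 - x) / 2 : ℝ) : UnitAddCircle) (π * t / 2) / 2) := by
  have hp := Real.pi_pos
  have h := hasSum_nat_sinKernel ((1 - x) / 2) (t := π * t / 2) (by positivity)
  rw [← hasSum_nat_add_iff' 1] at h
  simp only [Finset.range_one, Finset.sum_singleton, Nat.cast_zero, mul_zero, zero_mul, sub_zero] at h
  refine (h.div_const 2).congr_fun ?_
  intro n
  have h1 : Real.sin (2 * π * ((1 - x) / 2) * ((n + 1 : ℕ) : ℝ))
      = (-1 : ℝ)^n * Real.sin (π * ((n : ℝ) + 1) * x) := by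
    have : 2 * π * ((1 - x) / 2) * ((n + 1 : ℕ) : ℝ)
      = ((n + 1 : ℕ) : ℝ) * π - π * ((n : ℝ) + 1) * x := by push_cast; ring
    rw [this, Real.sin_nat_mul_pi_sub, pow_succ]; ring
  rw [h1]
  have h2 : -π * (((n + 1 : ℕ) : ℝ))^2 * (π * t / 2) = -(π^2) * ((n : ℝ) + 1)^2 * t / 2 := by
    push_cast; ring
  rw [h2]; push_cast; ring

open HurwitzZeta in
lemma rfun_eq (x : ℝ) {t : ℝ} (ht : 0 < t) :
    rfun t x = π / 2 * sinKernel (((1 - x) / 2 : ℝ) : UnitAddCircle) (π * t / 2) := by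
  rw [rfun, (rfun_hasSum x ht).tsum_eq]; ring

lemma rfun_cont (x : ℝ) : ContinuousOn (fun t => rfun t x) (Ioi 0) := by
  have hp := Real.pi_pos
  have h := (HurwitzZeta.continuousOn_sinKernel (((1 - x) / 2 : ℝ) : UnitAddCircle))
  have h2 : ContinuousOn (fun t : ℝ => π / 2 *
      HurwitzZeta.sinKernel (((1 - x) / 2 : ℝ) : UnitAddCircle) (π * t / 2)) (Ioi 0) := by
    refine continuousOn_const.mul (h.comp (f := fun t : ℝ => π * t / 2) (by fun_prop) ?_)
    intro t ht
    have : 0 < t := ht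
    show 0 < π * t / 2
    positivity
  exact h2.congr fun t ht => rfun_eq x ht

noncomputable def cc : ℝ := π / 2 * (1 / (π / 2) ^ (3 / 2 : ℝ))

/-- `h(u,t) = t^{-3/2} u exp(-2u²/t)` -/
noncomputable def hh (u t : ℝ) : ℝ := 1 / (t * √t) * (u * Real.exp (-(2 * u^2 / t)))

lemma cc_nonneg : 0 ≤ cc := by have := Real.pi_pos; unfold cc; positivity

lemma rfun_hasSum' (x : ℝ) {t : ℝ} (ht : 0 < t) :
    HasSum (fun n : ℕ => cc * (hh (n + (1 - x) / 2) t - hh (n + (1 + x) / 2) t)) (rfun t x) := by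
  have hp := Real.pi_pos
  have h := HurwitzZeta.oddKernel_functional_equation (((1 - x) / 2 : ℝ) : UnitAddCircle)
    (1 / (π * t / 2))
  have hs := HurwitzZeta.hasSum_int_oddKernel ((1 - x) / 2) (x := 1 / (π * t / 2)) (by positivity)
  have hs2 := hs.nat_add_neg_add_one
  rw [one_div_one_div] at h
  have hr : rfun t x = cc * (1 / (t * √t)) *
      HurwitzZeta.oddKernel (((1 - x) / 2 : ℝ) : UnitAddCircle) (1 / (π * t / 2)) := by
    rw [rfun_eq x ht, h, cc]
    have e1 : (1 / (π * t / 2)) ^ (3 / 2 : ℝ) = 1 / ((π / 2) ^ (3 / 2 : ℝ) * (t * √t)) := by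
      rw [Real.div_rpow (by norm_num) (by positivity), Real.one_rpow]
      congr 1
      rw [show π * t / 2 = (π / 2) * t by ring, Real.mul_rpow (by positivity) ht.le]
      congr 1
      rw [show (3 / 2 : ℝ) = 1 + 1 / 2 by norm_num, Real.rpow_add ht, Real.rpow_one,
        Real.sqrt_eq_rpow]
    rw [e1]
    have : 0 < (π / 2) ^ (3 / 2 : ℝ) := by positivity
    have : 0 < t * √t := by positivity
    field_simp
  rw [hr]
  refine (hs2.mul_left _).congr_fun ?_
  intro n
  unfold hh
  have e2 : -π * (((n : ℤ) : ℝ) + (1 - x) / 2) ^ 2 * (1 / (π * t / 2))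
      = -(2 * ((n : ℝ) + (1 - x) / 2)^2 / t) := by
    push_cast; field_simp
  have e3 : -π * (((-((n : ℤ) + 1) : ℤ) : ℝ) + (1 - x) / 2) ^ 2 * (1 / (π * t / 2))
      = -(2 * ((n : ℝ) + (1 + x) / 2)^2 / t) := by
    push_cast; field_simp; ring
  rw [e2, e3]
  push_cast
  ring

lemma exp_neg_le_two_div {w : ℝ} (hw : 0 < w) : Real.exp (-w) ≤ 2 / w^2 := by
  rw [Real.exp_neg, inv_eq_one_div, div_le_div_iff₀ (Real.exp_pos _) (by positivity)]
  have := Real.quadratic_le_exp_of_nonneg hw.le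
  nlinarith

lemma hh_lip {m u v t : ℝ} (hm : 0 < m) (hu : m ≤ u) (hv : m ≤ v) (ht : 0 < t) (ht1 : t ≤ 1) :
    |hh u t - hh v t| ≤ 8 / m^4 * |u - v| := by
  have hd : ∀ y ∈ Ici m, HasDerivWithinAt (fun u => hh u t)
      (1 / (t * √t) * ((1 - 4 * y^2 / t) * Real.exp (-(2 * y^2 / t)))) (Ici m) y := by
    intro y _
    have h1 : HasDerivAt (fun y : ℝ => -(2 * y^2 / t)) (-(4 * y / t)) y := by
      have := (((hasDerivAt_pow 2 y).const_mul 2).div_const t).neg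
      convert! this using 1
      norm_num; ring
    have h2 := ((hasDerivAt_id y).mul h1.exp).const_mul (1 / (t * √t))
    refine (HasDerivAt.hasDerivWithinAt ?_)
    convert! h2 using 1
    simp only [id]; ring
  have hb : ∀ y ∈ Ici m, ‖1 / (t * √t) * ((1 - 4 * y^2 / t) * Real.exp (-(2 * y^2 / t)))‖
      ≤ 8 / m^4 := by
    intro y hy
    have hy : m ≤ y := hy
    have hy0 : 0 < y := hm.trans_le hy
    set w := y^2 / t with hw
    have hw0 : 0 < w := by positivity
    have e1 : 4 * y^2 / t = 4 * w := by rw [hw]; ring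
    have e2 : 2 * y^2 / t = w + w := by rw [hw]; ring
    have hs : 0 < √t := Real.sqrt_pos.2 ht
    have hst : t ≤ √t := Real.le_sqrt_of_sq_le (by nlinarith)
    rw [e1, e2, norm_mul, norm_mul, Real.norm_of_nonneg (Real.exp_pos _).le,
      Real.norm_of_nonneg (by positivity : 0 ≤ 1 / (t * √t))]
    have a1 : ‖1 - 4 * w‖ ≤ 4 * Real.exp w := by
      have := Real.add_one_le_exp w
      rw [Real.norm_eq_abs, abs_le]; constructor <;> linarith
    have a2 : Real.exp (-(w + w)) = Real.exp (-w) * Real.exp (-w) := by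
      rw [← Real.exp_add]; congr 1; ring
    have a3 : Real.exp w * Real.exp (-w) = 1 := by rw [← Real.exp_add]; simp
    have a4 := exp_neg_le_two_div hw0
    have a5 : 2 / w^2 = 2 * t^2 / y^4 := by rw [hw]; field_simp
    have a6 : 1 / (t * √t) ≤ 1 / t^2 := by
      apply one_div_le_one_div_of_le (by positivity); nlinarith
    calc 1 / (t * √t) * (‖1 - 4 * w‖ * Real.exp (-(w + w)))
        ≤ 1 / t^2 * ((4 * Real.exp w) * (Real.exp (-w) * Real.exp (-w))) := by
          rw [a2]; gcongr
      _ = 1 / t^2 * (4 * Real.exp (-w)) := by linear_combination (1 / t^2 * 4 * Real.exp (-w)) * a3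
      _ ≤ 1 / t^2 * (4 * (2 * t^2 / y^4)) := by rw [← a5]; gcongr
      _ = 8 / y^4 := by field_simp; norm_num
      _ ≤ 8 / m^4 := by gcongr
  have := Convex.norm_image_sub_le_of_norm_hasDerivWithin_le hd hb (convex_Ici m) hv hu
  simpa [Real.norm_eq_abs] using this

lemma hh_nonneg {u t : ℝ} (hu : 0 ≤ u) (ht : 0 < t) : 0 ≤ hh u t := by
  unfold hh; positivity

lemma hh_le {u t : ℝ} (hu : 0 ≤ u) (ht : 0 < t) : hh u t ≤ u / (√t * (t + u^2)) := by
  have hs : 0 < √t := Real.sqrt_pos.2 ht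
  have : Real.exp (-(2 * u^2 / t)) ≤ t / (t + u^2) := by
    rw [Real.exp_neg, inv_eq_one_div, div_le_div_iff₀ (Real.exp_pos _) (by positivity)]
    have h := Real.add_one_le_exp (2 * u^2 / t)
    have h2 : t * (2 * u^2 / t + 1) = 2 * u^2 + t := by field_simp
    nlinarith [sq_nonneg u]
  unfold hh
  calc _ ≤ 1 / (t * √t) * (u * (t / (t + u^2))) := by gcongr
    _ = _ := by field_simp

lemma arct {u : ℝ} (hu : 0 ≤ u) :
    IntegrableOn (fun t => u / (√t * (t + u^2))) (Ioi 0) ∧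
    ∫ t in Ioi 0, u / (√t * (t + u^2)) ≤ π := by
  rcases hu.eq_or_lt with rfl | hu
  · simp [Real.pi_pos.le]
  have hc : ContinuousWithinAt (fun t => 2 * Real.arctan (√t / u)) (Ici 0) 0 := by
    apply Continuous.continuousWithinAt
    have := Real.continuous_arctan
    fun_prop
  have hd : ∀ t ∈ Ioi (0:ℝ), HasDerivAt (fun t => 2 * Real.arctan (√t / u))
      (u / (√t * (t + u^2))) t := by
    intro t ht
    have ht : 0 < t := ht
    have hs : 0 < √t := Real.sqrt_pos.2 ht
    have := (((Real.hasDerivAt_sqrt ht.ne').div_const u).arctan).const_mul 2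
    convert! this using 1
    rw [div_pow, Real.sq_sqrt ht.le]
    field_simp; ring
  have hn : ∀ t ∈ Ioi (0:ℝ), 0 ≤ u / (√t * (t + u^2)) := by
    intro t ht
    have ht : 0 < t := ht
    positivity
  have hl : Tendsto (fun t => 2 * Real.arctan (√t / u)) atTop (nhds (2 * (π / 2))) := by
    apply Tendsto.const_mul
    have h1 := (Real.tendsto_arctan_atTop.mono_right nhdsWithin_le_nhds)
    exact h1.comp (Real.tendsto_sqrt_atTop.atTop_div_const hu)
  refine ⟨integrableOn_Ioi_deriv_of_nonneg hc hd hn hl, ?_⟩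
  rw [integral_Ioi_of_hasDerivAt_of_nonneg hc hd hn hl]
  simp; linarith

lemma r_tail (x : ℝ) (hx : x ∈ Icc (0:ℝ) 1) {t : ℝ} (ht : 0 < t) (ht1 : t ≤ 1) :
    |rfun t x - cc * (hh ((1 - x) / 2) t - hh ((1 + x) / 2) t)| ≤
      cc * 8 * (∑' n : ℕ, 1 / ((n : ℝ) + 1)^4) * x := by
  obtain ⟨hx0, hx1⟩ := hx
  have h := rfun_hasSum' x ht
  rw [← hasSum_nat_add_iff' 1] at h
  simp only [Finset.range_one, Finset.sum_singleton, Nat.cast_zero, zero_add] at h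
  have hZ : Summable (fun n : ℕ => 1 / ((n : ℝ) + 1)^4) := by
    have := (summable_nat_add_iff 1).2 (Real.summable_one_div_nat_pow.2 (by norm_num : 1 < 4))
    simpa using this
  have hZ2 := (hZ.hasSum.mul_left (cc * 8)).mul_right x
  rw [← Real.norm_eq_abs, ← h.tsum_eq]
  refine tsum_of_norm_bounded hZ2 ?_
  intro n
  have hn : (0:ℝ) ≤ n := Nat.cast_nonneg n
  have hl := hh_lip (m := (n:ℝ) + 1) (u := ((n + 1 : ℕ) : ℝ) + (1 - x) / 2)
    (v := ((n + 1 : ℕ) : ℝ) + (1 + x) / 2) (by positivity) (by push_cast; linarith)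
    (by push_cast; linarith) ht ht1
  have e : |((n + 1 : ℕ) : ℝ) + (1 - x) / 2 - (((n + 1 : ℕ) : ℝ) + (1 + x) / 2)| = x := by
    rw [show ((n + 1 : ℕ) : ℝ) + (1 - x) / 2 - (((n + 1 : ℕ) : ℝ) + (1 + x) / 2) = -x by ring,
      abs_neg, abs_of_nonneg hx0]
  rw [e] at hl
  rw [Real.norm_eq_abs, abs_mul, abs_of_nonneg cc_nonneg]
  calc _ ≤ cc * (8 / ((n:ℝ) + 1)^4 * x) := by gcongr; exact cc_nonneg
    _ = _ := by ring

lemma r_bound : ∃ K : ℝ, 0 ≤ K ∧ ∀ x ∈ Icc (0:ℝ) 1, ∃ B : ℝ → ℝ,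
    IntegrableOn B (Ioc 0 1) ∧ ∫ t in Ioc 0 1, B t ≤ K * x ∧ ∀ t ∈ Ioc (0:ℝ) 1, |rfun t x| ≤ B t := by
  have hp := Real.pi_pos
  set Z := ∑' n : ℕ, 1 / ((n : ℝ) + 1)^4 with hZ
  have hZ0 : 0 ≤ Z := tsum_nonneg fun n => by positivity
  have hc := cc_nonneg
  refine ⟨cc * 8 * Z + cc * 2048 + cc * (4 * π), by positivity, ?_⟩
  intro x hx
  have htail := fun t (ht : t ∈ Ioc (0:ℝ) 1) => r_tail x hx ht.1 ht.2
  obtain ⟨hx0, hx1⟩ := hx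
  rcases le_total x (1/2) with h2 | h2
  · refine ⟨fun _ => cc * 8 * Z * x + cc * 2048 * x, ?_, ?_, ?_⟩
    · exact integrableOn_const (by simp)
    · simp only [setIntegral_const, smul_eq_mul]
      simp
      have : 0 ≤ cc * (4 * π) * x := by positivity
      nlinarith
    · intro t ht
      have h1 := htail t ht
      have hl := hh_lip (m := 1/4) (u := (1 - x) / 2) (v := (1 + x) / 2) (by norm_num)
        (by linarith) (by linarith) ht.1 ht.2
      rw [show (1 - x) / 2 - (1 + x) / 2 = -x by ring, abs_neg, abs_of_nonneg hx0] at hl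
      norm_num at hl
      have h3 : |cc * (hh ((1 - x) / 2) t - hh ((1 + x) / 2) t)| ≤ cc * 2048 * x := by
        rw [abs_mul, abs_of_nonneg hc, mul_assoc]; gcongr
      have := abs_add_le (rfun t x - cc * (hh ((1 - x) / 2) t - hh ((1 + x) / 2) t))
        (cc * (hh ((1 - x) / 2) t - hh ((1 + x) / 2) t))
      rw [sub_add_cancel] at this
      linarith
  · obtain ⟨i1, j1⟩ := arct (u := (1 - x) / 2) (by linarith)
    obtain ⟨i2, j2⟩ := arct (u := (1 + x) / 2) (by linarith)
    have sub : Ioc (0:ℝ) 1 ⊆ Ioi 0 := fun t ht => ht.1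
    have k : ∀ u : ℝ, 0 ≤ u → IntegrableOn (fun t => u / (√t * (t + u^2))) (Ioi 0) →
        ∫ t in Ioi 0, u / (√t * (t + u^2)) ≤ π →
        ∫ t in Ioc 0 1, u / (√t * (t + u^2)) ≤ π := by
      intro u hu i j
      refine (setIntegral_mono_set i ?_ sub.eventuallyLE).trans j
      filter_upwards [ae_restrict_mem measurableSet_Ioi] with t ht
      have : 0 < t := ht
      show 0 ≤ _
      positivity
    have k1 := k _ (by linarith) i1 j1
    have k2 := k _ (by linarith) i2 j2
    have i1 := (i1.mono_set sub)
    have i2 := (i2.mono_set sub)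
    have i3 : IntegrableOn (fun _ : ℝ => cc * 8 * Z * x) (Ioc 0 1) :=
      integrableOn_const (by simp)
    refine ⟨fun t => cc * 8 * Z * x + cc * ((1 - x) / 2 / (√t * (t + ((1 - x) / 2)^2)) +
      (1 + x) / 2 / (√t * (t + ((1 + x) / 2)^2))), ?_, ?_, ?_⟩
    · exact i3.add ((i1.add i2).const_mul cc)
    · have i12 : IntegrableOn (fun t => (1 - x) / 2 / (√t * (t + ((1 - x) / 2)^2)) +
          (1 + x) / 2 / (√t * (t + ((1 + x) / 2)^2))) (Ioc 0 1) := i1.add i2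
      rw [integral_add i3 (i12.const_mul cc), integral_const_mul cc, integral_add i1 i2]
      simp only [setIntegral_const, smul_eq_mul]
      simp
      have a1 : cc * ((∫ t in Ioc 0 1, (1 - x) / 2 / (√t * (t + ((1 - x) / 2)^2))) +
        ∫ t in Ioc 0 1, (1 + x) / 2 / (√t * (t + ((1 + x) / 2)^2))) ≤ cc * (4 * π) * x := by
        calc _ ≤ cc * (π + π) := by gcongr
          _ ≤ cc * (4 * π * x) := by gcongr; nlinarith
          _ = _ := by ring
      have a2 : 0 ≤ cc * 2048 * x := by positivity
      linarith
    · intro t ht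
      have h1 := htail t ht
      have g1 := hh_le (u := (1 - x) / 2) (by linarith) ht.1
      have g2 := hh_le (u := (1 + x) / 2) (by linarith) ht.1
      have g3 := hh_nonneg (u := (1 - x) / 2) (by linarith) ht.1
      have g4 := hh_nonneg (u := (1 + x) / 2) (by linarith) ht.1
      have h3 : |cc * (hh ((1 - x) / 2) t - hh ((1 + x) / 2) t)| ≤
          cc * ((1 - x) / 2 / (√t * (t + ((1 - x) / 2)^2)) +
            (1 + x) / 2 / (√t * (t + ((1 + x) / 2)^2))) := by
        rw [abs_mul, abs_of_nonneg hc]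
        gcongr
        rw [abs_le]; constructor <;> linarith
      have := abs_add_le (rfun t x - cc * (hh ((1 - x) / 2) t - hh ((1 + x) / 2) t))
        (cc * (hh ((1 - x) / 2) t - hh ((1 + x) / 2) t))
      rw [sub_add_cancel] at this
      linarith

lemma four_le_pi_sq : 8 ≤ π^2 := by nlinarith [Real.pi_gt_three]

lemma E_summable {t : ℝ} (ht : 0 < t) : Summable (fun n : ℕ =>
    ((n : ℝ) + 2)^2 * Real.exp (-(π^2) * (((n : ℝ) + 2)^2 - 1) * t / 2)) := by
  have h := (summable_nat_add_iff 2).2 (Real.summable_pow_mul_exp_neg_nat_mul 2 ht)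
  refine Summable.of_nonneg_of_le (fun n => by positivity) (fun n => ?_) h
  push_cast
  gcongr
  have hn : (0:ℝ) ≤ n := Nat.cast_nonneg n
  have h8 := four_le_pi_sq
  have : 8 * (((n:ℝ) + 2)^2 - 1) ≤ π^2 * (((n : ℝ) + 2)^2 - 1) := by
    apply mul_le_mul_of_nonneg_right h8; nlinarith
  have h3 : 2 * ((n : ℝ) + 2) ≤ π^2 * (((n : ℝ) + 2)^2 - 1) := by nlinarith
  nlinarith

lemma E_nonneg (t : ℝ) : 0 ≤ Efun t := by
  unfold Efun
  have : 0 ≤ ∑' n : ℕ, ((n : ℝ) + 2)^2 * Real.exp (-(π^2) * (((n : ℝ) + 2)^2 - 1) * t / 2) :=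
    tsum_nonneg fun n => by positivity
  positivity

lemma E_decay {a s : ℝ} (ha : 0 < a) (hs : a ≤ s) : Efun s ≤ Efun a * Real.exp (-(s - a)) := by
  unfold Efun
  rw [mul_assoc, ← tsum_mul_right]
  refine mul_le_mul_of_nonneg_left ?_ (sq_nonneg π)
  refine Summable.tsum_le_tsum ?_ (E_summable (ha.trans_le hs)) ((E_summable ha).mul_right _)
  · intro n
    rw [mul_assoc (((n : ℝ) + 2)^2), ← Real.exp_add]
    gcongr
    have hn : (0:ℝ) ≤ n := Nat.cast_nonneg n
    have h8 := four_le_pi_sq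
    have h1 : 8 * (((n:ℝ) + 2)^2 - 1) ≤ π^2 * (((n : ℝ) + 2)^2 - 1) := by
      apply mul_le_mul_of_nonneg_right h8; nlinarith
    have h2 : 2 ≤ π^2 * (((n : ℝ) + 2)^2 - 1) := by nlinarith
    nlinarith [mul_le_mul_of_nonneg_right h2 (sub_nonneg.2 hs)]

lemma abs_sin_nat_mul (n : ℕ) (y : ℝ) : |Real.sin (n * y)| ≤ n * |Real.sin y| := by
  induction n with
  | zero => simp
  | succ k ih =>
    push_cast
    rw [add_mul, one_mul, Real.sin_add, add_mul, one_mul]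
    refine (abs_add_le _ _).trans ?_
    rw [abs_mul, abs_mul]
    have h1 := Real.abs_cos_le_one y
    have h2 := Real.abs_cos_le_one (k * y)
    have h3 := abs_nonneg (Real.sin y)
    have h4 := abs_nonneg (Real.sin (k * y))
    nlinarith

/-- difference function -/
noncomputable def FF (x t : ℝ) : ℝ := Real.exp (π^2 * t / 2) * rfun t x - π * Real.sin (π * x)

lemma FF_bound (x : ℝ) {t : ℝ} (ht : 0 < t) : |FF x t| ≤ Efun t * |Real.sin (π * x)| / π := by
  have hp := Real.pi_pos
  have h := (rfun_hasSum x ht)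
  have hr := rfun_eq x ht
  have h := (h.mul_left π).mul_left (Real.exp (π^2 * t / 2))
  have e : Real.exp (π^2 * t / 2) * (π * (HurwitzZeta.sinKernel (((1 - x) / 2 : ℝ) : UnitAddCircle) (π * t / 2) / 2)) = Real.exp (π^2 * t / 2) * rfun t x := by
    rw [hr]; ring
  rw [e, ← hasSum_nat_add_iff' 1] at h
  have e2 : Real.exp (π^2 * t / 2) * rfun t x - ∑ n ∈ Finset.range 1, Real.exp (π^2 * t / 2) *
     (π * ((-1 : ℝ)^n * ((n : ℝ) + 1) *
      Real.exp (-(π^2) * ((n : ℝ) + 1)^2 * t / 2) * Real.sin (π * ((n : ℝ) + 1) * x))) = FF x t := by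
    simp only [Finset.range_one, Finset.sum_singleton, FF]
    have : Real.exp (π^2 * t / 2) * Real.exp (-(π^2) * (((0:ℕ) : ℝ) + 1)^2 * t / 2) = 1 := by
      rw [← Real.exp_add, Real.exp_eq_one_iff]; push_cast; ring
    have h5 : π * (((0:ℕ):ℝ) + 1) * x = π * x := by push_cast; ring
    rw [h5]
    simp only [pow_zero, Nat.cast_zero] at this ⊢
    linear_combination (-π * Real.sin (π * x)) * this
  rw [e2] at h
  rw [← Real.norm_eq_abs, ← h.tsum_eq]
  have hE := (((E_summable ht).hasSum.mul_left (π^2)).mul_right (|Real.sin (π * x)|)).div_const π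
  refine tsum_of_norm_bounded hE ?_
  intro n
  have hs := abs_sin_nat_mul (n + 2) (π * x)
  have e4 : π * (((n + 1 : ℕ) : ℝ) + 1) * x = ((n + 2 : ℕ) : ℝ) * (π * x) := by push_cast; ring
  rw [e4, norm_mul, norm_mul, norm_mul, norm_mul, norm_mul, norm_pow, norm_neg, norm_one, one_pow,
    Real.norm_of_nonneg (Real.exp_pos _).le, Real.norm_of_nonneg (Real.exp_pos _).le,
    Real.norm_of_nonneg hp.le, Real.norm_eq_abs, Real.norm_eq_abs,
    abs_of_nonneg (by positivity : (0:ℝ) ≤ ((n + 1 : ℕ) : ℝ) + 1)]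
  have e5 : Real.exp (-(π^2) * (((n : ℝ) + 2)^2 - 1) * t / 2) = Real.exp (π^2 * t / 2) *
      Real.exp (-(π^2) * (((n + 1 : ℕ) : ℝ) + 1)^2 * t / 2) := by
    rw [← Real.exp_add]; congr 1; push_cast; ring
  rw [e5]
  calc _ ≤ Real.exp (π^2 * t / 2) * (π * (1 * (((n + 1 : ℕ) : ℝ) + 1) *
        Real.exp (-(π^2) * (((n + 1 : ℕ) : ℝ) + 1)^2 * t / 2) *
          (((n + 2 : ℕ) : ℝ) * |Real.sin (π * x)|))) := by gcongr
    _ = _ := by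
      push_cast
      field_simp; ring

lemma key (x : ℝ) {S T : Set ℝ} {G : ℝ → ℝ} (hS : MeasurableSet S) (hT : MeasurableSet T)
    (hST : S ⊆ T) (hT0 : T ⊆ Ioi 0) (hv : volume S < ⊤) (hG : IntegrableOn G T)
    (hb : ∀ t ∈ T, |FF x t| ≤ G t) :
    |Ifun x S - π * (volume S).toReal * Real.sin (π * x)| ≤ ∫ t in T, G t := by
  have hcont : ContinuousOn (FF x) (Ioi 0) := by
    unfold FF
    exact ((by fun_prop : Continuous fun t : ℝ => Real.exp (π^2 * t / 2)).continuousOn.mul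
      (rfun_cont x)).sub continuousOn_const
  have hm : AEStronglyMeasurable (FF x) (volume.restrict S) :=
    (hcont.mono (hST.trans hT0)).aestronglyMeasurable hS
  have hae : ∀ᵐ t ∂(volume.restrict S), ‖FF x t‖ ≤ G t := by
    filter_upwards [ae_restrict_mem hS] with t ht using hb t (hST ht)
  have hGS := hG.mono_set hST
  have hi : IntegrableOn (FF x) S := hGS.mono' hm hae
  have hic : IntegrableOn (fun _ : ℝ => π * Real.sin (π * x)) S := integrableOn_const hv.ne
  have e : Ifun x S - π * (volume S).toReal * Real.sin (π * x) = ∫ t in S, FF x t := by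
    have : Ifun x S = ∫ t in S, (FF x t + π * Real.sin (π * x)) := by
      unfold Ifun FF; simp
    rw [this, integral_add hi hic, setIntegral_const, smul_eq_mul, Measure.real]
    ring
  rw [e, ← Real.norm_eq_abs]
  refine (norm_integral_le_of_norm_le hGS hae).trans ?_
  refine setIntegral_mono_set hG ?_ hST.eventuallyLE
  filter_upwards [ae_restrict_mem hT] with t ht using (abs_nonneg _).trans (hb t ht)

lemma exp_int (a c : ℝ) : IntegrableOn (fun s => c * Real.exp (-(s - a))) (Ioi a) ∧
    ∫ s in Ioi a, c * Real.exp (-(s - a)) = c := by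
  have e : (fun s => c * Real.exp (-(s - a))) = fun s => (c * Real.exp a) * Real.exp (-s) := by
    ext s; rw [mul_assoc, ← Real.exp_add]; congr 2; ring
  rw [e]
  constructor
  · refine Integrable.const_mul ?_ _
    have := exp_neg_integrableOn_Ioi a one_pos
    simpa [IntegrableOn] using this
  · rw [integral_const_mul, integral_exp_neg_Ioi, mul_assoc, ← Real.exp_add]; simp

/-- `|I(x,S) − π·λ(S)·sin(πx)| ≤ C·min(x, E_{inf S}·min(1,λ(S))·sin(πx))`, the
second term of the minimum being discarded (i.e. `+∞`) when `inf S = 0`. -/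
theorem stmt8 :
    ∃ C : ℝ, 0 < C ∧ ∀ x ∈ Set.Icc (0:ℝ) 1, ∀ S : Set ℝ,
      MeasurableSet S → S ⊆ Set.Ioi 0 → volume S < ⊤ →
      |Ifun x S - π * (volume S).toReal * Real.sin (π * x)| ≤ C * x ∧
      (0 < sInf S →
        |Ifun x S - π * (volume S).toReal * Real.sin (π * x)| ≤
          C * (Efun (sInf S) * min 1 (volume S).toReal * Real.sin (π * x))) := by
  have hp := Real.pi_pos
  have hp3 := Real.pi_gt_three
  obtain ⟨K, hK, hB⟩ := r_bound
  have hE1 := E_nonneg 1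
  refine ⟨Real.exp (π^2 / 2) * K + π^2 + Efun 1 + 1, by positivity, ?_⟩
  intro x hx S hS hS0 hv
  have hx0 := hx.1
  have hx1 := hx.2
  have hsin : 0 ≤ Real.sin (π * x) := Real.sin_nonneg_of_nonneg_of_le_pi (by positivity) (by nlinarith)
  have hsinx : Real.sin (π * x) ≤ π * x := Real.sin_le (by positivity)
  constructor
  · obtain ⟨B, hBi, hBK, hBb⟩ := hB x hx
    obtain ⟨e1, e2⟩ := exp_int 1 (Efun 1 * x)
    have hdis : Disjoint (Ioc (0:ℝ) 1) (Ioi 1) := by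
      rw [Set.disjoint_left]; intro t h1 h2; exact absurd h1.2 (not_le.2 h2)
    have hun : Ioi (0:ℝ) = Ioc 0 1 ∪ Ioi 1 := (Ioc_union_Ioi_eq_Ioi zero_le_one).symm
    set B1 : ℝ → ℝ := fun t => Real.exp (π^2 / 2) * B t + π^2 * x with hB1
    set G : ℝ → ℝ := fun t => if t ≤ 1 then B1 t else Efun 1 * x * Real.exp (-(t - 1)) with hG
    have ic : IntegrableOn (fun _ : ℝ => π^2 * x) (Ioc 0 1) := integrableOn_const (by simp)
    have iB1 : IntegrableOn B1 (Ioc 0 1) := (hBi.const_mul _).add ic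
    have q1 : EqOn G B1 (Ioc 0 1) := fun t ht => if_pos ht.2
    have q2 : EqOn G (fun t => Efun 1 * x * Real.exp (-(t - 1))) (Ioi 1) :=
      fun t ht => if_neg (not_le.2 ht)
    have iG1 : IntegrableOn G (Ioc 0 1) := iB1.congr_fun q1.symm measurableSet_Ioc
    have iG2 : IntegrableOn G (Ioi 1) := e1.congr_fun q2.symm measurableSet_Ioi
    have iG : IntegrableOn G (Ioi 0) := by rw [hun]; exact iG1.union iG2
    refine (key x hS measurableSet_Ioi hS0 subset_rfl hv iG ?_).trans ?_
    · intro t ht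
      have ht : 0 < t := ht
      by_cases h1 : t ≤ 1
      · rw [q1 ⟨ht, h1⟩]
        have hb := hBb t ⟨ht, h1⟩
        have hexp : Real.exp (π^2 * t / 2) ≤ Real.exp (π^2 / 2) := by
          gcongr; nlinarith [sq_nonneg π]
        have h2 : |Real.exp (π^2 * t / 2) * rfun t x| ≤ Real.exp (π^2 / 2) * B t := by
          rw [abs_mul, abs_of_nonneg (Real.exp_pos _).le]; gcongr
        have h3 : |π * Real.sin (π * x)| ≤ π^2 * x := by
          rw [abs_of_nonneg (by positivity)]; nlinarith
        exact (abs_sub _ _).trans (add_le_add h2 h3)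
      · have h1 : 1 < t := not_le.1 h1
        rw [q2 h1]
        refine (FF_bound x ht).trans ?_
        have hd := E_decay one_pos h1.le
        rw [abs_of_nonneg hsin, div_le_iff₀ hp]
        calc _ ≤ (Efun 1 * Real.exp (-(t - 1))) * (π * x) := by gcongr
          _ = _ := by ring
    · rw [hun, setIntegral_union hdis measurableSet_Ioi iG1 iG2,
        setIntegral_congr_fun measurableSet_Ioc q1, setIntegral_congr_fun measurableSet_Ioi q2, e2,
        hB1, integral_add (hBi.const_mul _) ic, integral_const_mul]
      simp only [setIntegral_const, smul_eq_mul]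
      simp
      have : Real.exp (π^2 / 2) * ∫ t in Ioc 0 1, B t ≤ Real.exp (π^2 / 2) * (K * x) := by gcongr
      nlinarith
  · intro ha
    set a := sInf S with hadef
    have hbd : BddBelow S := ⟨0, fun t ht => (hS0 ht).le⟩
    have hSa : S ⊆ Ici a := fun t ht => csInf_le hbd ht
    have hEa := E_nonneg a
    have hpt : ∀ t ∈ Ici a, |FF x t| ≤ Efun a * Real.sin (π * x) * Real.exp (-(t - a)) := by
      intro t ht
      have ht : a ≤ t := ht
      refine (FF_bound x (ha.trans_le ht)).trans ?_
      have hd := E_decay ha ht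
      rw [abs_of_nonneg hsin, div_le_iff₀ hp]
      calc _ ≤ (Efun a * Real.exp (-(t - a))) * Real.sin (π * x) * 1 := by rw [mul_one]; gcongr
        _ ≤ (Efun a * Real.exp (-(t - a))) * Real.sin (π * x) * π := by gcongr; linarith
        _ = _ := by ring
    obtain ⟨e1, e2⟩ := exp_int a (Efun a * Real.sin (π * x))
    have b1 := key x hS measurableSet_Ici hSa (fun t (ht : a ≤ t) => ha.trans_le ht) hv
      ((integrableOn_Ici_iff_integrableOn_Ioi enorm_ne_top).2 e1) hpt
    rw [integral_Ici_eq_integral_Ioi, e2] at b1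
    have b2 := key x (G := fun _ => Efun a * Real.sin (π * x)) hS hS subset_rfl hS0 hv
      (integrableOn_const hv.ne) (fun t ht => (hpt t (hSa ht)).trans (by
        have : a ≤ t := hSa ht
        have h1 : Real.exp (-(t - a)) ≤ 1 := Real.exp_le_one_iff.2 (by linarith)
        exact mul_le_of_le_one_right (by positivity) h1))
    rw [setIntegral_const, smul_eq_mul, Measure.real] at b2
    have hfin : |Ifun x S - π * (volume S).toReal * Real.sin (π * x)| ≤
        Efun a * min 1 (volume S).toReal * Real.sin (π * x) := by
      rcases min_cases 1 (volume S).toReal with h | h <;> rw [h.1]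
      · linarith
      · linarith
    refine hfin.trans ?_
    apply le_mul_of_one_le_left
    · have : 0 ≤ min 1 (volume S).toReal := le_min zero_le_one ENNReal.toReal_nonneg
      positivity
    · have : 0 ≤ Real.exp (π^2 / 2) * K + π^2 + Efun 1 := by positivity
      linarith
end
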